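/- Let η ≥ 1 be an integer, let q ≥ 3 and let χ be a nonprincipal real Dirichlet character modulo q (so χ takes values in {−1, 0, 1}). For n ≥ 1 set r*(n) = ∑_{d | n} χ(d), let ω(n) denote the number of distinct prime factors of n, let μ denote the Möbius function, and for an integer N ≥ 1 set L_N = log(ω(N) + 3). Let L(1,χ) = ∑_{n≥1} χ(n)/n, let Γ denote the Gamma function, and define P(1) = ∏_{p | N} [(1 − 1/p)(1 − χ(p)/p)]^η · ∏_{p ∤ N} [(1 − 1/p)^η · (1 − χ(p)/p)^η · (1 + η(1 + χ(p))/p)], the products running over primes. Then there exist constants C, C' > 0, depending only on η and χ, such that for every integer N ≥ 1 and every real X ≥ exp(C·L_N^{2eη+2}): |∑_{n ≤ X, gcd(n,N)=1} μ(n)²·η^{ω(n)}·r*(n) − (P(1)·L(1,χ)^η/Γ(η))·X·(log X)^{η−1}| ≤ C'·(P(1)·L(1,χ)^η/Γ(η))·X·(log X)^{η−1}·L_N^{2eη+2}·(log X)^{−1/2}, where e is Euler's number. -/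

import Mathlib

open Finset

/-- The Euler product `P(1)` attached to a real-valued Dirichlet character `χ` mod `q`,
a positive integer `η` and a level `N`:
`P(1) = ∏_{p ∣ N} [(1 − 1/p)(1 − χ(p)/p)]^η ·
  ∏_{p ∤ N} (1 − 1/p)^η (1 − χ(p)/p)^η (1 + η(1 + χ(p))/p)`,
the products running over primes. -/
noncomputable def eulerProductP1 (q : ℕ) (χ : DirichletCharacter ℝ q) (η N : ℕ) : ℝ :=
  ∏' p : Nat.Primes,
    (if (p : ℕ) ∣ N then
      ((1 - 1 / ((p : ℕ) : ℝ)) * (1 - χ ((p : ℕ) : ZMod q) / ((p : ℕ) : ℝ))) ^ η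
    else
      (1 - 1 / ((p : ℕ) : ℝ)) ^ η * (1 - χ ((p : ℕ) : ZMod q) / ((p : ℕ) : ℝ)) ^ η *
        (1 + (η : ℝ) * (1 + χ ((p : ℕ) : ZMod q)) / ((p : ℕ) : ℝ)))

/-!
Write `f(n) = μ(n)² η^ω(n) r*(n)`, restricted to `n` coprime to `N`, as the Dirichlet convolution
of the `η`-fold convolution power of `r*` with a multiplicative function `g`. Boundedness of
character sums and the hyperbola method give `∑_{n ≤ y} r*(n) = L(1, χ) y + O(√y)`, and
`L(1, χ) > 0` because `L(1, χ) ≠ 0`. By induction on `η`, Abel summation turns this into a mean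
value `L(1, χ)^η y (log y)^(η - 1) / Γ(η)` of the convolution power, with relative error
`O((log y)^(-1/2))`.

At a prime `p`, the Bell series of `g` is `(1 + f(p) X) ((1 - X) (1 - χ(p) X))^η`. Its linear term
vanishes when `p ∤ N`, so only the primes dividing `N` matter, and Rankin's trick with the shift
`δ = 1 / (4 L_N)` gives `∑ |g(m)| (1 + log m) / m ≪ L_N^(2η + 1)`. On the other hand
`P(1) = ∑ g(m) / m`, and comparing Euler products at the levels `N` and `1` gives
`P(1) ≫ L_N^(-2η)`. The relative error is therefore `O(L_N^(4η + 1) (log X)^(-1/2))` as soon as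
`X ≥ e`, and `4η + 1 ≤ 2eη + 2`.
-/

namespace CharacterMeanValue

open Filter Topology ArithmeticFunction
open scoped ArithmeticFunction.zeta ArithmeticFunction.Moebius

section PartialSummation

variable {a b w : ℕ → ℝ} {m M : ℕ}

lemma sum_Ioc_mul_nonneg_of_antitoneOn (ha : ∀ k ∈ Ioc m M, 0 ≤ ∑ i ∈ Ioc m k, a i)
    (hw : AntitoneOn w (Set.Ioc m M)) (hw0 : ∀ i ∈ Ioc m M, 0 ≤ w i) :
    0 ≤ ∑ i ∈ Ioc m M, a i * w i := by
  rcases Nat.lt_or_ge m M with hmM | hMm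
  · suffices H : ∀ k ∈ Ioc m M, (∑ i ∈ Ioc m k, a i) * w k ≤ ∑ i ∈ Ioc m k, a i * w i by
      have hM : M ∈ Ioc m M := by simpa using hmM
      exact (mul_nonneg (ha M hM) (hw0 M hM)).trans (H M hM)
    intro k hk
    obtain ⟨hmk, hkM⟩ := mem_Ioc.1 hk
    induction k, hmk using Nat.le_induction with
    | base => simp
    | succ k hmk ih =>
      have hk' : k ∈ Ioc m M := mem_Ioc.2 ⟨hmk, by omega⟩
      have hanti : w (k + 1) ≤ w k := hw (mem_Ioc.1 hk') (mem_Ioc.1 hk) (Nat.le_succ k)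
      rw [sum_Ioc_succ_top (by omega), sum_Ioc_succ_top (by omega), add_mul]
      gcongr
      exact (mul_le_mul_of_nonneg_left hanti (ha k hk')).trans (ih hk' (by omega))
  · simp [Ioc_eq_empty_of_le hMm]

lemma sum_Ioc_mul_le_sum_Ioc_mul_of_antitoneOn
    (hab : ∀ k ∈ Ioc m M, ∑ i ∈ Ioc m k, a i ≤ ∑ i ∈ Ioc m k, b i)
    (hw : AntitoneOn w (Set.Ioc m M)) (hw0 : ∀ i ∈ Ioc m M, 0 ≤ w i) :
    ∑ i ∈ Ioc m M, a i * w i ≤ ∑ i ∈ Ioc m M, b i * w i := by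
  have h := sum_Ioc_mul_nonneg_of_antitoneOn (a := fun i => b i - a i)
    (fun k hk => by simpa [sum_sub_distrib] using hab k hk) hw hw0
  simpa [sub_mul, sum_sub_distrib] using h

lemma abs_sum_Ioc_mul_le_of_antitoneOn {B : ℝ} (ha : ∀ k, |∑ i ∈ Ioc m k, a i| ≤ B)
    (hw : AntitoneOn w (Set.Ioi m)) (hw0 : ∀ i, m < i → 0 ≤ w i) :
    |∑ i ∈ Ioc m M, a i * w i| ≤ B * w (m + 1) := by
  have hB : 0 ≤ B := (abs_nonneg _).trans (ha 0)
  have upper : ∀ c : ℕ → ℝ, (∀ k, ∑ i ∈ Ioc m k, c i ≤ B) →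
      ∑ i ∈ Ioc m M, c i * w i ≤ B * w (m + 1) := by
    intro c hc
    calc ∑ i ∈ Ioc m M, c i * w i
        ≤ ∑ i ∈ Ioc m M, (if i = m + 1 then B else 0) * w i := by
          refine sum_Ioc_mul_le_sum_Ioc_mul_of_antitoneOn (fun k hk => ?_)
            (hw.mono Set.Ioc_subset_Ioi_self) fun i hi => hw0 i (mem_Ioc.1 hi).1
          rw [sum_ite_eq' (Ioc m k), if_pos (by simpa using (mem_Ioc.1 hk).1)]
          exact hc k
      _ ≤ B * w (m + 1) := by
          simp only [ite_mul, zero_mul, sum_ite_eq' (Ioc m M)]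
          split_ifs
          · exact le_rfl
          · exact mul_nonneg hB (hw0 _ (Nat.lt_succ_self m))
  refine abs_le'.2 ⟨upper a fun k => (abs_le.1 (ha k)).2, ?_⟩
  simpa using upper (fun i => -a i) fun k => by simpa using neg_le.1 (abs_le.1 (ha k)).1

lemma sum_Ioc_inv_sqrt_le (M : ℕ) : ∑ n ∈ Ioc 0 M, (√(n : ℝ))⁻¹ ≤ 2 * √(M : ℝ) := by
  induction M with
  | zero => simp
  | succ M ih =>
    rw [sum_Ioc_succ_top (Nat.zero_le M)]
    have hM : (√((M + 1 : ℕ) : ℝ)) ^ 2 = √(M : ℝ) ^ 2 + 1 := by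
      rw [Real.sq_sqrt (by positivity), Real.sq_sqrt (by positivity)]; push_cast; ring
    have hpos : 0 < √((M + 1 : ℕ) : ℝ) := by positivity
    have hinv : (√((M + 1 : ℕ) : ℝ))⁻¹ ≤ 2 * (√((M + 1 : ℕ) : ℝ) - √(M : ℝ)) := by
      rw [inv_le_iff_one_le_mul₀ hpos]
      nlinarith [sq_nonneg (√((M + 1 : ℕ) : ℝ) - √(M : ℝ))]
    linarith

lemma sum_Ioc_div_sqrt_le {K : ℝ} (hK : 0 ≤ K) (ha : ∀ k ∈ Ioc 0 M, ∑ n ∈ Ioc 0 k, a n ≤ K * k) :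
    ∑ n ∈ Ioc 0 M, a n / √(n : ℝ) ≤ 2 * K * √(M : ℝ) := by
  have hanti : AntitoneOn (fun n : ℕ => (√(n : ℝ))⁻¹) (Set.Ioc 0 M) := fun i hi j _ hij =>
    inv_anti₀ (Real.sqrt_pos.2 (by exact_mod_cast hi.1)) (Real.sqrt_le_sqrt (by exact_mod_cast hij))
  calc ∑ n ∈ Ioc 0 M, a n / √(n : ℝ) ≤ ∑ n ∈ Ioc 0 M, K * (√(n : ℝ))⁻¹ := by
        simp only [div_eq_mul_inv]
        refine sum_Ioc_mul_le_sum_Ioc_mul_of_antitoneOn (fun k hk => ?_) hanti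
          fun i _ => by positivity
        simpa [mul_comm] using ha k hk
    _ ≤ 2 * K * √(M : ℝ) := by
        rw [← mul_sum]
        nlinarith [sum_Ioc_inv_sqrt_le M]

end PartialSummation

section CharacterSums

variable {q : ℕ} {χ : DirichletCharacter ℝ q}

lemma abs_apply_le_one (n : ZMod q) : |χ n| ≤ 1 := χ.norm_le_one n

lemma sum_range_add_natCast [NeZero q] {M : Type*} [AddCommMonoid M] (f : ZMod q → M) (x : ZMod q) :
    ∑ i ∈ range q, f (x + i) = ∑ y, f y := by
  rw [← Equiv.sum_comp (Equiv.addLeft x) f]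
  refine sum_bij' (fun i _ => (i : ZMod q)) (fun y _ => y.val) (fun _ _ => mem_univ _)
    (fun y _ => mem_range.2 y.val_lt) (fun i hi => ZMod.val_cast_of_lt (mem_range.1 hi))
    (fun y _ => y.natCast_zmod_val) fun _ _ => rfl

lemma abs_sum_range_apply_le [NeZero q] (hχ : χ ≠ 1) (x : ZMod q) (n : ℕ) :
    |∑ i ∈ range n, χ (x + i)| ≤ q := by
  induction n using Nat.strong_induction_on with
  | _ n ih =>
    rcases Nat.lt_or_ge n q with hnq | hqn
    · calc |∑ i ∈ range n, χ (x + i)| ≤ ∑ i ∈ range n, |χ (x + i)| := abs_sum_le_sum_abs _ _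
        _ ≤ ∑ i ∈ range n, 1 := sum_le_sum fun i _ => abs_apply_le_one _
        _ ≤ q := by simpa using hnq.le
    · obtain ⟨k, rfl⟩ := Nat.exists_eq_add_of_le hqn
      rw [sum_range_add, sum_range_add_natCast, MulChar.sum_eq_zero_of_ne_one hχ, zero_add]
      simpa using ih k (Nat.lt_add_of_pos_left (NeZero.pos q))

lemma abs_sum_Ioc_apply_le [NeZero q] (hχ : χ ≠ 1) (m n : ℕ) :
    |∑ i ∈ Ioc m n, χ (i : ZMod q)| ≤ q := by
  rw [← Ico_add_one_add_one_eq_Ioc, sum_Ico_eq_sum_range]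
  simpa using abs_sum_range_apply_le hχ (m + 1) (n - m)

lemma abs_sub_sum_apply_div_le [NeZero q] (hχ : χ ≠ 1) {L : ℝ}
    (hL : Tendsto (fun M : ℕ => ∑ n ∈ Icc 1 M, χ (n : ZMod q) / n) atTop (𝓝 L)) (m : ℕ) :
    |L - ∑ n ∈ Ioc 0 m, χ (n : ZMod q) / n| ≤ q / (m + 1) := by
  refine le_of_tendsto (hL.sub_const _).abs ?_
  filter_upwards [eventually_ge_atTop m] with M hM
  have hsplit : ∑ n ∈ Icc 1 M, χ (n : ZMod q) / n - ∑ n ∈ Ioc 0 m, χ (n : ZMod q) / n =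
      ∑ n ∈ Ioc m M, χ (n : ZMod q) * (n : ℝ)⁻¹ := by
    rw [show Icc 1 M = Ioc 0 M from rfl, ← sum_Ioc_consecutive _ (Nat.zero_le m) hM,
      add_sub_cancel_left]
    rfl
  rw [hsplit, div_eq_mul_inv, ← Nat.cast_add_one]
  refine abs_sum_Ioc_mul_le_of_antitoneOn (abs_sum_Ioc_apply_le hχ m) ?_ fun i _ => by positivity
  intro i hi j _ hij
  exact inv_anti₀ (by exact_mod_cast (Nat.zero_le m).trans_lt hi) (by exact_mod_cast hij)

end CharacterSums

section MeanValues

open Asymptotics MeasureTheory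

/-- The summatory function `y ↦ ∑_{n ≤ y} a(n)` of an arithmetic function. -/
noncomputable def summatory (a : ArithmeticFunction ℝ) (y : ℝ) : ℝ := ∑ n ∈ Ioc 0 ⌊y⌋₊, a n

/-- `a` has mean value `c (log y)^k`: `∑_{n ≤ y} a(n) = c y (log y)^k + O(y (1 + log y)^{k - 1/2})`
for `y ≥ 1`, where `1 + log` avoids the zero of `log` at `1`. Saving only half a power of the
logarithm makes the class stable under convolution with functions satisfying `HasSqrtMean`, without
the `log log` which a full power would produce at `k = 0`. -/
def HasLogMean (a : ArithmeticFunction ℝ) (c : ℝ) (k : ℕ) : Prop :=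
  (fun y => summatory a y - c * y * Real.log y ^ k) =O[𝓟 (Set.Ici 1)]
    fun y => y * (1 + Real.log y) ^ ((k : ℝ) - 1 / 2)

/-- `a` has mean value `c` with square-root saving: `∑_{n ≤ y} a(n) = c y + O(√y)` for `y ≥ 1`. -/
def HasSqrtMean (a : ArithmeticFunction ℝ) (c : ℝ) : Prop :=
  (fun y => summatory a y - c * y) =O[𝓟 (Set.Ici 1)] fun y => √y

variable {a b r : ArithmeticFunction ℝ} {c L y : ℝ} {k : ℕ}

lemma summatory_natCast (a : ArithmeticFunction ℝ) (n : ℕ) :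
    summatory a n = ∑ i ∈ Ioc 0 n, a i := by
  rw [summatory, Nat.floor_natCast]

lemma summatory_eq_sum_Icc (a : ArithmeticFunction ℝ) (y : ℝ) :
    summatory a y = ∑ n ∈ Icc 0 ⌊y⌋₊, a n := by
  rw [summatory, Icc_eq_cons_Ioc (Nat.zero_le _), sum_cons, ArithmeticFunction.map_zero, zero_add]

lemma summatory_mul (a b : ArithmeticFunction ℝ) (y : ℝ) :
    summatory (a * b) y = ∑ n ∈ Ioc 0 ⌊y⌋₊, a n * summatory b (y / n) := by
  simp only [summatory, sum_Ioc_mul_eq_sum_sum, Nat.floor_div_natCast]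

lemma intervalIntegrable_summatory_div_sq (a : ArithmeticFunction ℝ) (hy : 1 ≤ y) :
    IntervalIntegrable (fun t => summatory a t / t ^ 2) volume 1 y := by
  rw [intervalIntegrable_iff_integrableOn_Icc_of_le hy]
  have hcont : ContinuousOn (fun t : ℝ => (t ^ 2)⁻¹) (Set.Icc 1 y) :=
    (continuousOn_pow 2).inv₀ fun t ht => pow_ne_zero 2 (zero_lt_one.trans_le ht.1).ne'
  refine (integrableOn_mul_sum_Icc (fun n => a n) (m := 0) zero_le_one
    hcont.integrableOn_Icc).congr_fun (fun t _ => ?_) measurableSet_Icc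
  simp only [← summatory_eq_sum_Icc, div_eq_inv_mul]

lemma sum_div_eq_summatory_div_add_integral (a : ArithmeticFunction ℝ) (hy : 1 ≤ y) :
    ∑ n ∈ Ioc 0 ⌊y⌋₊, a n / n = summatory a y / y + ∫ t in 1..y, summatory a t / t ^ 2 := by
  have hne : ∀ t ∈ Set.Icc 1 y, t ≠ 0 := fun t ht => (zero_lt_one.trans_le ht.1).ne'
  have hint : IntegrableOn (deriv fun t : ℝ => t⁻¹) (Set.Icc 1 y) := by
    rw [deriv_inv']
    exact ((continuousOn_pow 2).inv₀ fun t ht => pow_ne_zero 2 (hne t ht)).neg.integrableOn_Icc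
  have habel := sum_mul_eq_sub_integral_mul₀ (f := fun t : ℝ => t⁻¹) (fun n => a n)
    ArithmeticFunction.map_zero y
    (fun t ht => differentiableAt_inv (hne t ht)) hint
  nth_rw 1 [Icc_eq_cons_Ioc (Nat.zero_le _)] at habel
  rw [sum_cons, ArithmeticFunction.map_zero, mul_zero, zero_add] at habel
  simp only [← summatory_eq_sum_Icc, deriv_inv', neg_mul, intervalIntegral.integral_neg,
    sub_neg_eq_add, ← intervalIntegral.integral_of_le hy] at habel
  simpa only [div_eq_inv_mul] using habel

lemma integral_comp_const_add_log_div {g : ℝ → ℝ} (hy : 1 ≤ y)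
    (hg : ContinuousOn g (Set.Icc c (c + Real.log y))) :
    ∫ t in 1..y, g (c + Real.log t) / t = ∫ u in c..(c + Real.log y), g u := by
  have hpos : ∀ t ∈ Set.uIcc 1 y, 0 < t := fun t ht =>
    zero_lt_one.trans_le (Set.uIcc_of_le hy ▸ ht).1
  have himage : (fun t => c + Real.log t) '' Set.uIcc 1 y ⊆ Set.Icc c (c + Real.log y) := by
    rintro _ ⟨t, ht, rfl⟩
    rw [Set.uIcc_of_le hy] at ht
    exact ⟨by linarith [Real.log_nonneg ht.1],
      by linarith [Real.log_le_log (zero_lt_one.trans_le ht.1) ht.2]⟩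
  have hsubst := intervalIntegral.integral_comp_mul_deriv' (f := fun t => c + Real.log t)
    (f' := fun t => t⁻¹) (a := 1) (b := y)
    (fun t ht => (Real.hasDerivAt_log (hpos t ht).ne').const_add c)
    (continuousOn_inv₀.mono fun t ht => (hpos t ht).ne') (hg.mono himage)
  simpa [div_eq_mul_inv] using hsubst

lemma intervalIntegrable_comp_const_add_log_div {g : ℝ → ℝ} (hy : 1 ≤ y)
    (hg : ∀ t ∈ Set.Icc 1 y, ContinuousAt g (c + Real.log t)) :
    IntervalIntegrable (fun t => g (c + Real.log t) / t) volume 1 y := by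
  refine ContinuousOn.intervalIntegrable fun t ht => ContinuousAt.continuousWithinAt ?_
  rw [Set.uIcc_of_le hy] at ht
  have ht0 : t ≠ 0 := (zero_lt_one.trans_le ht.1).ne'
  exact ((hg t ht).comp (f := fun t => c + Real.log t)
    (continuousAt_const.add (Real.continuousAt_log ht0))).div continuousAt_id ht0

lemma integral_log_pow_div (k : ℕ) (hy : 1 ≤ y) :
    ∫ t in 1..y, Real.log t ^ k / t = Real.log y ^ (k + 1) / (k + 1) := by
  simpa using integral_comp_const_add_log_div (c := 0) hy (continuousOn_pow k)

lemma integral_one_add_log_rpow_div_le {s : ℝ} (hs : -1 < s) (hy : 1 ≤ y) :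
    ∫ t in 1..y, (1 + Real.log t) ^ s / t ≤ (1 + Real.log y) ^ (s + 1) / (s + 1) := by
  rw [integral_comp_const_add_log_div (g := (· ^ s)) hy fun u hu =>
    (Real.continuousAt_rpow_const _ _ (.inl (zero_lt_one.trans_le hu.1).ne')).continuousWithinAt,
    integral_rpow (.inl hs), Real.one_rpow]
  have : 0 < s + 1 := by linarith
  gcongr
  linarith

lemma isBigO_one_add_log_rpow {s t : ℝ} (hst : s ≤ t) :
    (fun y => (1 + Real.log y) ^ s) =O[𝓟 (Set.Ici 1)] fun y => (1 + Real.log y) ^ t := by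
  refine isBigO_principal.2 ⟨1, fun y hy => ?_⟩
  have hlog := Real.log_nonneg hy
  rw [one_mul, Real.norm_of_nonneg (by positivity), Real.norm_of_nonneg (by positivity)]
  exact Real.rpow_le_rpow_of_exponent_le (by linarith) hst

lemma isBigO_log_pow_one_add_log_rpow (k : ℕ) :
    (fun y => Real.log y ^ k) =O[𝓟 (Set.Ici 1)] fun y => (1 + Real.log y) ^ (k : ℝ) := by
  refine isBigO_principal.2 ⟨1, fun y hy => ?_⟩
  have hlog := Real.log_nonneg hy
  rw [one_mul, Real.rpow_natCast, Real.norm_of_nonneg (by positivity),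
    Real.norm_of_nonneg (by positivity)]
  gcongr
  linarith

lemma HasLogMean.summatory_isBigO (ha : HasLogMean a c k) :
    summatory a =O[𝓟 (Set.Ici 1)] fun y => y * (1 + Real.log y) ^ (k : ℝ) := by
  have hmain : (fun y => c * y * Real.log y ^ k) =O[𝓟 (Set.Ici 1)]
      fun y => y * (1 + Real.log y) ^ (k : ℝ) :=
    (isBigO_const_mul_self c _ _).mul (isBigO_log_pow_one_add_log_rpow k)
  have herror := ha.trans ((isBigO_refl (fun y : ℝ => y) _).mul
    (isBigO_one_add_log_rpow (by linarith : (k : ℝ) - 1 / 2 ≤ k)))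
  simpa using herror.add hmain

lemma HasLogMean.exists_bound (ha : HasLogMean a c k) : ∃ B : ℝ, 0 < B ∧ ∀ y, 1 ≤ y →
    |summatory a y - c * y * Real.log y ^ k| ≤
      B * (y * (1 + Real.log y) ^ ((k : ℝ) - 1 / 2)) := by
  obtain ⟨B, hB, h⟩ := ha.exists_pos
  refine ⟨B, hB, fun y hy => ?_⟩
  have hlog := Real.log_nonneg hy
  have hyB := isBigOWith_principal.1 h y hy
  rwa [Real.norm_eq_abs, Real.norm_of_nonneg (by positivity)] at hyB

lemma HasLogMean.exists_abs_summatory_div_sq_sub_le (ha : HasLogMean a c k) :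
    ∃ B : ℝ, 0 < B ∧ ∀ y, 1 ≤ y →
      |summatory a y / y ^ 2 - c * (Real.log y ^ k / y)| ≤
        B * ((1 + Real.log y) ^ ((k : ℝ) - 1 / 2) / y) := by
  obtain ⟨B, hB, h⟩ := ha.exists_bound
  refine ⟨B, hB, fun y hy => ?_⟩
  have hy0 : 0 < y := zero_lt_one.trans_le hy
  calc |summatory a y / y ^ 2 - c * (Real.log y ^ k / y)|
      = |summatory a y - c * y * Real.log y ^ k| / y ^ 2 := by
        rw [← abs_of_pos (pow_pos hy0 2), ← abs_div, abs_of_pos (pow_pos hy0 2)]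
        congr 1
        field_simp
    _ ≤ B * (y * (1 + Real.log y) ^ ((k : ℝ) - 1 / 2)) / y ^ 2 := by
        gcongr
        exact h y hy
    _ = B * ((1 + Real.log y) ^ ((k : ℝ) - 1 / 2) / y) := by field_simp

lemma HasLogMean.isBigO_integral (ha : HasLogMean a c k) :
    (fun y => (∫ t in 1..y, summatory a t / t ^ 2) - c / (k + 1) * Real.log y ^ (k + 1))
      =O[𝓟 (Set.Ici 1)] fun y => (1 + Real.log y) ^ ((k : ℝ) + 1 / 2) := by
  obtain ⟨B, hB, hbound⟩ := ha.exists_abs_summatory_div_sq_sub_le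
  refine isBigO_principal.2 ⟨B / (k + 1 / 2), fun y hy => ?_⟩
  have hy : 1 ≤ y := hy
  have hs : -1 < (k : ℝ) - 1 / 2 := by linarith [Nat.cast_nonneg (α := ℝ) k]
  have hmain : ∫ t in 1..y, c * (Real.log t ^ k / t) = c / (k + 1) * Real.log y ^ (k + 1) := by
    rw [intervalIntegral.integral_const_mul, integral_log_pow_div k hy]
    ring
  have hmain_int : IntervalIntegrable (fun t => c * (Real.log t ^ k / t)) volume 1 y := by
    simpa using (intervalIntegrable_comp_const_add_log_div (c := 0) (g := (· ^ k)) hy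
      fun t _ => continuousAt_id.pow k).const_mul c
  have herror_int : IntervalIntegrable
      (fun t => B * ((1 + Real.log t) ^ ((k : ℝ) - 1 / 2) / t)) volume 1 y :=
    (intervalIntegrable_comp_const_add_log_div (c := 1) (g := (· ^ ((k : ℝ) - 1 / 2))) hy
      fun t ht => Real.continuousAt_rpow_const _ _
        (.inl (by linarith [Real.log_nonneg ht.1]))).const_mul B
  rw [← hmain, ← intervalIntegral.integral_sub (intervalIntegrable_summatory_div_sq a hy) hmain_int]
  calc _ ≤ ∫ t in 1..y, B * ((1 + Real.log t) ^ ((k : ℝ) - 1 / 2) / t) := by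
        exact intervalIntegral.norm_integral_le_of_norm_le hy
          (ae_of_all _ fun t ht => hbound t ht.1.le) herror_int
    _ ≤ B * ((1 + Real.log y) ^ ((k : ℝ) - 1 / 2 + 1) / (k - 1 / 2 + 1)) := by
        rw [intervalIntegral.integral_const_mul]
        gcongr
        exact integral_one_add_log_rpow_div_le hs hy
    _ = B / (k + 1 / 2) * ‖(1 + Real.log y) ^ ((k : ℝ) + 1 / 2)‖ := by
        have hlog := Real.log_nonneg hy
        rw [Real.norm_of_nonneg (by positivity), show (k : ℝ) - 1 / 2 + 1 = k + 1 / 2 by ring]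
        ring

lemma HasLogMean.isBigO_sum_div (ha : HasLogMean a c k) :
    (fun y => ∑ n ∈ Ioc 0 ⌊y⌋₊, a n / n - c / (k + 1) * Real.log y ^ (k + 1))
      =O[𝓟 (Set.Ici 1)] fun y => (1 + Real.log y) ^ ((k : ℝ) + 1 / 2) := by
  have hdiv : (fun y => summatory a y / y) =O[𝓟 (Set.Ici 1)]
      fun y => (1 + Real.log y) ^ ((k : ℝ) + 1 / 2) := by
    refine IsBigO.trans ?_ (isBigO_one_add_log_rpow (by linarith : (k : ℝ) ≤ k + 1 / 2))
    refine (ha.summatory_isBigO.mul (isBigO_refl (fun y : ℝ => y⁻¹) _)).congr' .rfl ?_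
    filter_upwards [mem_principal_self _] with y hy
    have : 0 < y := zero_lt_one.trans_le hy
    field_simp
  refine (hdiv.add ha.isBigO_integral).congr' ?_ .rfl
  filter_upwards [mem_principal_self _] with y hy
  rw [sum_div_eq_summatory_div_add_integral a hy]
  ring

lemma HasLogMean.isBigO_sum_div_sqrt (ha0 : ∀ n, 0 ≤ a n) (ha : HasLogMean a c k) :
    (fun y => ∑ n ∈ Ioc 0 ⌊y⌋₊, a n / √(n : ℝ)) =O[𝓟 (Set.Ici 1)]
      fun y => √y * (1 + Real.log y) ^ (k : ℝ) := by
  obtain ⟨B, hB, hbound⟩ := ha.summatory_isBigO.exists_pos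
  rw [IsBigOWith, eventually_principal] at hbound
  refine isBigO_principal.2 ⟨2 * B, fun y hy => ?_⟩
  have hy0 : 0 ≤ y := zero_le_one.trans hy
  have hlog := Real.log_nonneg hy
  rw [Real.norm_of_nonneg (sum_nonneg fun n _ => div_nonneg (ha0 n) (Real.sqrt_nonneg _)),
    Real.norm_of_nonneg (by positivity), Real.rpow_natCast]
  calc ∑ n ∈ Ioc 0 ⌊y⌋₊, a n / √(n : ℝ)
      ≤ 2 * (B * (1 + Real.log y) ^ k) * √(⌊y⌋₊ : ℝ) := by
        refine sum_Ioc_div_sqrt_le (by positivity) fun m hm => ?_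
        obtain ⟨hm0, hmy⟩ := mem_Ioc.1 hm
        have hm1 : (1 : ℝ) ≤ m := by exact_mod_cast hm0
        have hlogm := Real.log_nonneg hm1
        have hlogm_le : Real.log m ≤ Real.log y :=
          Real.log_le_log (by linarith) ((Nat.le_floor_iff hy0).1 hmy)
        calc ∑ n ∈ Ioc 0 m, a n ≤ ‖summatory a m‖ := by
              rw [summatory_natCast]
              exact le_abs_self _
          _ ≤ B * (m * (1 + Real.log m) ^ k) := by
              simpa [abs_of_nonneg, hlogm, add_nonneg] using hbound m hm1
          _ ≤ B * (1 + Real.log y) ^ k * m := by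
              rw [mul_comm (m : ℝ), ← mul_assoc]
              gcongr
    _ ≤ 2 * (B * (1 + Real.log y) ^ k) * √y := by
        gcongr
        exact Nat.floor_le hy0
    _ = 2 * B * (√y * (1 + Real.log y) ^ k) := by ring

lemma HasLogMean.isBigO_summatory_mul_sub (ha0 : ∀ n, 0 ≤ a n) (ha : HasLogMean a c k)
    (hr : HasSqrtMean r L) :
    (fun y => summatory (a * r) y - L * y * ∑ n ∈ Ioc 0 ⌊y⌋₊, a n / n) =O[𝓟 (Set.Ici 1)]
      fun y => y * (1 + Real.log y) ^ (k : ℝ) := by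
  obtain ⟨B, -, hbound⟩ := hr.exists_pos
  rw [IsBigOWith, eventually_principal] at hbound
  have hterm : (fun y => summatory (a * r) y - L * y * ∑ n ∈ Ioc 0 ⌊y⌋₊, a n / n)
      =O[𝓟 (Set.Ici 1)] fun y => √y * ∑ n ∈ Ioc 0 ⌊y⌋₊, a n / √(n : ℝ) := by
    refine isBigO_principal.2 ⟨B, fun y hy => ?_⟩
    have hy0 : 0 ≤ y := zero_le_one.trans hy
    rw [Real.norm_of_nonneg (mul_nonneg (Real.sqrt_nonneg _)
      (sum_nonneg fun n _ => div_nonneg (ha0 n) (Real.sqrt_nonneg _))), summatory_mul, mul_sum,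
      ← sum_sub_distrib, mul_sum, mul_sum]
    refine (norm_sum_le _ _).trans (sum_le_sum fun n hn => ?_)
    obtain ⟨hn0, hny⟩ := mem_Ioc.1 hn
    have hyn : 1 ≤ y / n :=
      (one_le_div (by exact_mod_cast hn0)).2 ((Nat.le_floor_iff hy0).1 hny)
    calc ‖a n * summatory r (y / n) - L * y * (a n / n)‖
        = a n * ‖summatory r (y / n) - L * (y / n)‖ := by
          rw [← Real.norm_of_nonneg (ha0 n), ← norm_mul, Real.norm_of_nonneg (ha0 n)]
          ring_nf
      _ ≤ a n * (B * √(y / n)) := by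
          gcongr
          · exact ha0 n
          · simpa [abs_of_nonneg] using hbound (y / n) hyn
      _ = B * (√y * (a n / √(n : ℝ))) := by
          rw [Real.sqrt_div hy0]
          ring
  refine hterm.trans (((isBigO_refl (fun y : ℝ => √y) _).mul
    (ha.isBigO_sum_div_sqrt ha0)).congr' .rfl ?_)
  filter_upwards [mem_principal_self _] with y hy
  rw [← mul_assoc, Real.mul_self_sqrt (zero_le_one.trans hy)]

lemma HasLogMean.mul (ha0 : ∀ n, 0 ≤ a n) (ha : HasLogMean a c k) (hr : HasSqrtMean r L) :
    HasLogMean (a * r) (c * L / (k + 1)) (k + 1) := by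
  have hdiff := (ha.isBigO_summatory_mul_sub ha0 hr).trans ((isBigO_refl (fun y : ℝ => y) _).mul
    (isBigO_one_add_log_rpow (by linarith : (k : ℝ) ≤ k + 1 / 2)))
  have hmain := (isBigO_const_mul_self L (fun y : ℝ => y) _).mul ha.isBigO_sum_div
  refine (hdiff.add hmain).congr (fun y => by ring) fun y => ?_
  rw [show ((k + 1 : ℕ) : ℝ) - 1 / 2 = k + 1 / 2 by push_cast; ring]

lemma HasSqrtMean.hasLogMean (hr : HasSqrtMean r L) : HasLogMean r L 0 := by
  refine (hr.trans (isBigO_principal.2 ⟨1, fun y hy => ?_⟩)).congr_left fun y => by ring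
  have hy1 : 1 ≤ y := hy
  have hlog := Real.log_nonneg hy1
  have hle : √(1 + Real.log y) ≤ √y :=
    Real.sqrt_le_sqrt (by linarith [Real.log_le_sub_one_of_pos (zero_lt_one.trans_le hy1)])
  rw [Nat.cast_zero, zero_sub, Real.rpow_neg (by linarith), ← Real.sqrt_eq_rpow,
    Real.norm_of_nonneg (by positivity), Real.norm_of_nonneg (by positivity), one_mul,
    le_mul_inv_iff₀ (by positivity)]
  calc √y * √(1 + Real.log y) ≤ √y * √y := by gcongr
    _ = y := Real.mul_self_sqrt (by linarith)

lemma pow_apply_nonneg (hr0 : ∀ n, 0 ≤ r n) (k n : ℕ) : 0 ≤ (r ^ k) n := by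
  induction k generalizing n with
  | zero => rw [pow_zero, one_apply]; split_ifs <;> norm_num
  | succ k ih =>
    rw [pow_succ, mul_apply]
    exact sum_nonneg fun x _ => mul_nonneg (ih _) (hr0 _)

lemma HasSqrtMean.hasLogMean_pow (hr0 : ∀ n, 0 ≤ r n) (hr : HasSqrtMean r L) (k : ℕ) :
    HasLogMean (r ^ (k + 1)) (L ^ (k + 1) / k.factorial) k := by
  induction k with
  | zero => simpa using hr.hasLogMean
  | succ k ih =>
    have hmul := ih.mul (pow_apply_nonneg hr0 _) hr
    rwa [← pow_succ, show L ^ (k + 1) / k.factorial * L / (k + 1) =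
      L ^ (k + 1 + 1) / ((k + 1).factorial : ℝ) by
        rw [Nat.factorial_succ]; push_cast; field_simp; ring] at hmul

end MeanValues

section CharacterDivisorSum

open Asymptotics

variable {q : ℕ} {χ : DirichletCharacter ℝ q}

/-- A Dirichlet character as an arithmetic function. -/
noncomputable abbrev characterFunction (χ : DirichletCharacter ℝ q) : ArithmeticFunction ℝ :=
  toArithmeticFunction (χ ·)

/-- The character sum `r*(n) = ∑_{d ∣ n} χ(d)`, as the Dirichlet convolution of `χ` and `1`. -/
noncomputable def rStar (χ : DirichletCharacter ℝ q) : ArithmeticFunction ℝ :=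
  characterFunction χ * ζ

lemma rStar_apply (χ : DirichletCharacter ℝ q) (n : ℕ) :
    rStar χ n = ∑ d ∈ n.divisors, χ (d : ZMod q) := by
  rw [rStar, coe_mul_zeta_apply]
  exact sum_congr rfl fun d hd =>
    (χ.apply_eq_toArithmeticFunction_apply (Nat.pos_of_mem_divisors hd).ne').symm

lemma isMultiplicative_rStar (χ : DirichletCharacter ℝ q) : (rStar χ).IsMultiplicative :=
  χ.isMultiplicative_toArithmeticFunction.mul isMultiplicative_zeta.natCast

lemma rStar_apply_prime_pow {p : ℕ} (hp : p.Prime) (e : ℕ) :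
    rStar χ (p ^ e) = ∑ i ∈ range (e + 1), χ (p : ZMod q) ^ i := by
  rw [rStar_apply, Nat.sum_divisors_prime_pow hp]
  simp only [Nat.cast_pow, map_pow]

lemma geom_sum_nonneg_of_abs_le_one {x : ℝ} (hx : |x| ≤ 1) (e : ℕ) :
    0 ≤ ∑ i ∈ range e, x ^ i := by
  rcases hx.lt_or_eq with hx | hx
  · rw [geom_sum_eq (abs_lt.1 hx).2.ne]
    have hpow : x ^ e ≤ 1 := (le_abs_self _).trans (abs_pow x e ▸ pow_le_one₀ (abs_nonneg x) hx.le)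
    exact div_nonneg_of_nonpos (by linarith) (by linarith [(abs_lt.1 hx).2])
  · rcases (abs_eq zero_le_one).1 hx with rfl | rfl
    · simp
    · rw [neg_one_geom_sum]
      split_ifs <;> norm_num

lemma rStar_nonneg (χ : DirichletCharacter ℝ q) (n : ℕ) : 0 ≤ rStar χ n := by
  rcases eq_or_ne n 0 with rfl | hn
  · simp
  · rw [(isMultiplicative_rStar χ).multiplicative_factorization _ hn]
    refine prod_nonneg fun p hp => ?_
    simp only [rStar_apply_prime_pow (Nat.prime_of_mem_primeFactors hp)]
    exact geom_sum_nonneg_of_abs_le_one (abs_apply_le_one _) _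

lemma summatory_rStar (χ : DirichletCharacter ℝ q) (y : ℝ) :
    summatory (rStar χ) y = ∑ n ∈ Ioc 0 ⌊y⌋₊, χ (n : ZMod q) * (⌊y⌋₊ / n : ℕ) := by
  rw [summatory, rStar, sum_Ioc_mul_zeta_eq_sum]
  exact sum_congr rfl fun n hn => by
    rw [← χ.apply_eq_toArithmeticFunction_apply (mem_Ioc.1 hn).1.ne']

lemma abs_sum_apply_mul_div_le [NeZero q] (hχ : χ ≠ 1) (m M : ℕ) :
    |∑ n ∈ Ioc m M, χ (n : ZMod q) * (M / n : ℕ)| ≤ q * (M / (m + 1)) := by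
  have hanti : AntitoneOn (fun n : ℕ => ((M / n : ℕ) : ℝ)) (Set.Ioi m) := fun i hi j _ hij =>
    Nat.cast_le.2 (Nat.div_le_div_left hij ((Nat.zero_le m).trans_lt hi))
  refine (abs_sum_Ioc_mul_le_of_antitoneOn (abs_sum_Ioc_apply_le hχ m) hanti
    fun i _ => by positivity).trans ?_
  gcongr
  exact_mod_cast Nat.cast_div_le (α := ℝ) (m := M) (n := m + 1)

lemma abs_sum_apply_mul_floor_sub_le {y : ℝ} (hy : 0 ≤ y) (m : ℕ) :
    |∑ n ∈ Ioc 0 m, χ (n : ZMod q) * (⌊y⌋₊ / n : ℕ) -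
      y * ∑ n ∈ Ioc 0 m, χ (n : ZMod q) / n| ≤ m := by
  rw [mul_sum, ← sum_sub_distrib]
  calc _ ≤ ∑ n ∈ Ioc 0 m, |χ (n : ZMod q) * (⌊y⌋₊ / n : ℕ) - y * (χ (n : ZMod q) / n)| :=
        abs_sum_le_sum_abs _ _
    _ ≤ ∑ n ∈ Ioc 0 m, 1 := by
        refine sum_le_sum fun n _ => ?_
        have hfloor : |(⌊y / n⌋₊ : ℝ) - y / n| ≤ 1 := by
          rw [abs_sub_comm, abs_of_nonneg (sub_nonneg.2 (Nat.floor_le (by positivity)))]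
          linarith [Nat.lt_floor_add_one (y / (n : ℝ))]
        calc _ = |χ (n : ZMod q)| * |(⌊y / n⌋₊ : ℝ) - y / n| := by
              rw [← abs_mul, Nat.floor_div_natCast]
              ring_nf
          _ ≤ 1 := mul_le_one₀ (abs_apply_le_one _) (abs_nonneg _) hfloor
    _ = m := by simp

lemma hasSqrtMean_rStar [NeZero q] (hχ : χ ≠ 1) {L : ℝ}
    (hL : Tendsto (fun M : ℕ => ∑ n ∈ Icc 1 M, χ (n : ZMod q) / n) atTop (𝓝 L)) :
    HasSqrtMean (rStar χ) L := by
  refine isBigO_principal.2 ⟨2 * q + 1, fun y hy => ?_⟩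
  have hy1 : 1 ≤ y := hy
  have hy0 : 0 ≤ y := by linarith
  set z := ⌊√y⌋₊
  have hz_le : (z : ℝ) ≤ √y := Nat.floor_le (Real.sqrt_nonneg y)
  have hzy : z ≤ ⌊y⌋₊ := Nat.floor_le_floor (Real.sqrt_le_self_iff.2 (.inr hy1))
  have hdiv : y / (z + 1) ≤ √y := by
    rw [div_le_iff₀ (by positivity)]
    nlinarith [Real.mul_self_sqrt hy0, Nat.lt_floor_add_one (√y), Real.sqrt_nonneg y]
  have hlarge : |∑ n ∈ Ioc z ⌊y⌋₊, χ (n : ZMod q) * (⌊y⌋₊ / n : ℕ)| ≤ q * √y :=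
    (abs_sum_apply_mul_div_le hχ z ⌊y⌋₊).trans
      (mul_le_mul_of_nonneg_left (le_trans (by gcongr; exact Nat.floor_le hy0) hdiv)
        (Nat.cast_nonneg q))
  have hsmall := abs_sum_apply_mul_floor_sub_le (χ := χ) hy0 z
  have htail : |y * (L - ∑ n ∈ Ioc 0 z, χ (n : ZMod q) / n)| ≤ q * √y := by
    rw [abs_mul, abs_of_nonneg hy0]
    calc _ ≤ y * (q / (z + 1)) := by gcongr; exact abs_sub_sum_apply_div_le hχ hL z
      _ = q * (y / (z + 1)) := by ring
      _ ≤ q * √y := by gcongr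
  rw [Real.norm_eq_abs, Real.norm_of_nonneg (Real.sqrt_nonneg y), summatory_rStar,
    ← sum_Ioc_consecutive _ (Nat.zero_le z) hzy, abs_le]
  rw [abs_le] at hlarge hsmall htail
  constructor <;> linarith

end CharacterDivisorSum

section ConvolutionComparison

variable {a b : ArithmeticFunction ℝ} {c U v : ℝ}

lemma summatory_of_lt_one (a : ArithmeticFunction ℝ) {y : ℝ} (hy : y < 1) : summatory a y = 0 := by
  rw [summatory, Nat.floor_eq_zero.2 hy, Ioc_self, sum_empty]

lemma sqrt_le_self_of_one_le (hU : 1 ≤ U) : √U ≤ U :=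
  Real.sqrt_le_iff.2 ⟨by linarith, le_self_pow₀ hU two_ne_zero⟩

lemma abs_sub_pow_sub_pow_le (hv : 0 ≤ v) (hvU : v ≤ U) (hU : 1 ≤ U) (k : ℕ) :
    |(U - v) ^ k - U ^ k| ≤ k * v * (U ^ k / √U) := by
  have hmax : max |U - v| |U| = U := by
    rw [abs_of_nonneg (sub_nonneg.2 hvU), abs_of_nonneg (zero_le_one.trans hU)]
    exact max_eq_right (sub_le_self U hv)
  have h := abs_pow_sub_pow_le (U - v) U k
  rw [sub_sub_cancel_left, abs_neg, abs_of_nonneg hv, hmax, mul_comm v] at h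
  refine h.trans ?_
  rcases k with _ | k
  · simp
  · have hs : 0 < √U := Real.sqrt_pos.2 (by linarith)
    rw [Nat.add_sub_cancel]
    gcongr
    rw [le_div_iff₀ hs, pow_succ]
    gcongr
    exact sqrt_le_self_of_one_le hU

lemma one_add_sub_rpow_le (hv : 0 ≤ v) (hvU : v ≤ U) (hU : 1 ≤ U) (k : ℕ) :
    (1 + (U - v)) ^ ((k : ℝ) - 1 / 2) ≤ 2 ^ k * (1 + v) * (U ^ k / √U) := by
  have hw : 0 < 1 + (U - v) := by linarith
  have hsqrt : √U ≤ (1 + v) * √(1 + (U - v)) := by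
    rw [← Real.sqrt_sq (by linarith : 0 ≤ 1 + v), ← Real.sqrt_mul (sq_nonneg _)]
    have hw0 := sub_nonneg.2 hvU
    exact Real.sqrt_le_sqrt (by nlinarith [mul_nonneg hv hw0, mul_nonneg (sq_nonneg v) hw0])
  calc (1 + (U - v)) ^ ((k : ℝ) - 1 / 2) = (1 + (U - v)) ^ k / √(1 + (U - v)) := by
        rw [Real.rpow_sub hw, Real.rpow_natCast, Real.sqrt_eq_rpow]
    _ ≤ (2 * U) ^ k / (√U / (1 + v)) := by
        gcongr
        · linarith
        · rwa [div_le_iff₀' (by linarith)]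
    _ = 2 ^ k * (1 + v) * (U ^ k / √U) := by
        rw [mul_pow]
        field_simp

lemma HasLogMean.exists_abs_summatory_div_sub_le_of_le {k : ℕ} (hb : HasLogMean b c k) :
    ∃ B : ℝ, 0 < B ∧ ∀ X, Real.exp 1 ≤ X → ∀ x, 1 ≤ x → x ≤ X →
      |summatory b (X / x) - c * (X / x) * Real.log X ^ k| ≤
        B * (1 + Real.log x) * (X / x * (Real.log X ^ k / √(Real.log X))) := by
  obtain ⟨B, hB, h⟩ := hb.exists_bound
  refine ⟨B * 2 ^ k + |c| * (k + 1), by positivity, fun X hX x hx hxX => ?_⟩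
  have hX0 : 0 < X := (Real.exp_pos 1).trans_le hX
  have hU : 1 ≤ Real.log X := (Real.le_log_iff_exp_le hX0).2 hX
  have hx0 : 0 < x := zero_lt_one.trans_le hx
  have hv := Real.log_nonneg hx
  have hvU : Real.log x ≤ Real.log X := Real.log_le_log hx0 hxX
  have hbound := h (X / x) ((one_le_div hx0).2 hxX)
  rw [Real.log_div hX0.ne' hx0.ne'] at hbound
  set U := Real.log X
  set v := Real.log x
  calc |summatory b (X / x) - c * (X / x) * U ^ k|
      ≤ |summatory b (X / x) - c * (X / x) * (U - v) ^ k| +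
          |c * (X / x) * (U - v) ^ k - c * (X / x) * U ^ k| := abs_sub_le _ _ _
    _ = |summatory b (X / x) - c * (X / x) * (U - v) ^ k| +
          |c| * (X / x) * |(U - v) ^ k - U ^ k| := by
        rw [← mul_sub, abs_mul, abs_mul, abs_of_pos (div_pos hX0 hx0)]
    _ ≤ B * (X / x * (2 ^ k * (1 + v) * (U ^ k / √U))) +
          |c| * (X / x) * ((k + 1) * (1 + v) * (U ^ k / √U)) := by
        gcongr
        · exact hbound.trans (by gcongr; exact one_add_sub_rpow_le hv hvU hU k)
        · refine (abs_sub_pow_sub_pow_le hv hvU hU k).trans ?_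
          gcongr <;> linarith
    _ = _ := by ring

lemma abs_summatory_div_sub_le_of_lt (b : ArithmeticFunction ℝ) (c : ℝ) (k : ℕ) {X x : ℝ}
    (hX : Real.exp 1 ≤ X) (hXx : X < x) :
    |summatory b (X / x) - c * (X / x) * Real.log X ^ k| ≤
      |c| * (1 + Real.log x) * (X / x * (Real.log X ^ k / √(Real.log X))) := by
  have hX0 : 0 < X := (Real.exp_pos 1).trans_le hX
  have hx0 : 0 < x := hX0.trans hXx
  have hU : 1 ≤ Real.log X := (Real.le_log_iff_exp_le hX0).2 hX
  have hUv : Real.log X ≤ 1 + Real.log x :=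
    (Real.log_le_log hX0 hXx.le).trans (le_add_of_nonneg_left zero_le_one)
  rw [summatory_of_lt_one b ((div_lt_one hx0).2 hXx), zero_sub, abs_neg, abs_mul, abs_mul,
    abs_of_pos (div_pos hX0 hx0), abs_of_nonneg (by positivity : 0 ≤ Real.log X ^ k)]
  calc |c| * (X / x) * Real.log X ^ k
      = |c| * √(Real.log X) * (X / x * (Real.log X ^ k / √(Real.log X))) := by field_simp
    _ ≤ |c| * (1 + Real.log x) * (X / x * (Real.log X ^ k / √(Real.log X))) := by
        gcongr
        exact (sqrt_le_self_of_one_le hU).trans hUv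

lemma HasLogMean.exists_abs_summatory_div_sub_le {k : ℕ} (hb : HasLogMean b c k) :
    ∃ B : ℝ, 0 < B ∧ ∀ X, Real.exp 1 ≤ X → ∀ x, 1 ≤ x →
      |summatory b (X / x) - c * (X / x) * Real.log X ^ k| ≤
        B * (1 + Real.log x) * (X / x * (Real.log X ^ k / √(Real.log X))) := by
  obtain ⟨B, hB, h⟩ := hb.exists_abs_summatory_div_sub_le_of_le
  refine ⟨B + |c|, by positivity, fun X hX x hx => ?_⟩
  have hX0 : 0 < X := (Real.exp_pos 1).trans_le hX
  have hU : 1 ≤ Real.log X := (Real.le_log_iff_exp_le hX0).2 hX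
  have hv := Real.log_nonneg hx
  rcases le_or_gt x X with hxX | hXx
  · refine (h X hX x hx hxX).trans ?_
    gcongr
    exact le_add_of_nonneg_right (abs_nonneg c)
  · refine (abs_summatory_div_sub_le_of_lt b c k hX hXx).trans ?_
    gcongr
    exact le_add_of_nonneg_left hB.le

lemma summatory_mul_eq_tsum (a b : ArithmeticFunction ℝ) {X : ℝ} (hX : 0 ≤ X) :
    summatory (a * b) X = ∑' m : ℕ, a m * summatory b (X / m) := by
  rw [summatory_mul, tsum_eq_sum fun m hm => ?_]
  rcases m.eq_zero_or_pos with rfl | hm0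
  · rw [ArithmeticFunction.map_zero, zero_mul]
  · have hXm : X < m := (Nat.floor_lt hX).1 (not_le.1 fun h => hm (mem_Ioc.2 ⟨hm0, h⟩))
    rw [summatory_of_lt_one b ((div_lt_one (by positivity)).2 hXm), mul_zero]

lemma summable_abs_div_of_mul_log (ha : Summable fun m : ℕ => |a m| * (1 + Real.log m) / m) :
    Summable fun m : ℕ => |a m| / m := by
  refine ha.of_nonneg_of_le (fun m => by positivity) fun m => ?_
  gcongr
  exact le_mul_of_one_le_right (abs_nonneg _) (le_add_of_nonneg_right (Real.log_natCast_nonneg m))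

lemma HasLogMean.exists_abs_summatory_mul_sub_le {k : ℕ} (hb : HasLogMean b c k) :
    ∃ B : ℝ, 0 < B ∧ ∀ a : ArithmeticFunction ℝ,
      Summable (fun m : ℕ => |a m| * (1 + Real.log m) / m) → ∀ X, Real.exp 1 ≤ X →
        |summatory (a * b) X - (∑' m : ℕ, a m / m) * (c * X * Real.log X ^ k)| ≤
          B * (X * (Real.log X ^ k / √(Real.log X))) *
            ∑' m : ℕ, |a m| * (1 + Real.log m) / m := by
  obtain ⟨B, hB, h⟩ := hb.exists_abs_summatory_div_sub_le
  refine ⟨B, hB, fun a ha X hX => ?_⟩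
  have hX0 : 0 ≤ X := (Real.exp_pos 1).le.trans hX
  set T := c * X * Real.log X ^ k
  set E := B * (X * (Real.log X ^ k / √(Real.log X)))
  have hterm : ∀ m : ℕ, ‖a m * summatory b (X / m) - a m / m * T‖ ≤
      E * (|a m| * (1 + Real.log m) / m) := by
    intro m
    rcases m.eq_zero_or_pos with rfl | hm
    · simp [ArithmeticFunction.map_zero]
    calc ‖a m * summatory b (X / m) - a m / m * T‖
        = |a m| * |summatory b (X / m) - c * (X / m) * Real.log X ^ k| := by
          rw [Real.norm_eq_abs, ← abs_mul]
          congr 1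
          ring
      _ ≤ |a m| * (B * (1 + Real.log m) * (X / m * (Real.log X ^ k / √(Real.log X)))) := by
          gcongr
          exact h X hX m (by exact_mod_cast hm)
      _ = E * (|a m| * (1 + Real.log m) / m) := by ring
  have hE := ha.mul_left E
  have hmain : Summable fun m : ℕ => a m / m * T :=
    ((summable_abs_div_of_mul_log ha).of_norm_bounded fun m => by simp).mul_right T
  have hconv : Summable fun m : ℕ => a m * summatory b (X / m) := by
    simpa using (hE.of_norm_bounded hterm).add hmain
  rw [summatory_mul_eq_tsum a b hX0, ← tsum_mul_right, ← hconv.tsum_sub hmain, ← tsum_mul_left]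
  exact tsum_of_norm_bounded hE.hasSum hterm

end ConvolutionComparison

section LValue

open Asymptotics

lemma HasSqrtMean.tendsto_sum_div {a : ArithmeticFunction ℝ} {c : ℝ} (ha : HasSqrtMean a c) :
    Tendsto (fun n : ℕ => (∑ k ∈ Icc 1 n, a k) / n) atTop (𝓝 c) := by
  have hO : (fun y => summatory a y / y - c) =O[atTop] fun y => (√y)⁻¹ := by
    refine (((ha.mono (le_principal_iff.2 (Ici_mem_atTop 1))).mul
      (isBigO_refl (fun y : ℝ => y⁻¹) _))).congr' ?_ ?_
    all_goals
      filter_upwards [eventually_gt_atTop 0] with y hy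
    · field_simp
    · rw [← div_eq_mul_inv, Real.sqrt_div_self]
  have hlim : Tendsto (fun y => summatory a y / y) atTop (𝓝 c) :=
    tendsto_sub_nhds_zero_iff.1 (hO.trans_tendsto (tendsto_inv_atTop_zero.comp
      Real.tendsto_sqrt_atTop))
  refine (hlim.comp tendsto_natCast_atTop_atTop).congr fun n => ?_
  simp only [Function.comp_apply, summatory_natCast]
  rfl

variable {q : ℕ} {χ : DirichletCharacter ℝ q}

lemma LSeries_rStar [NeZero q] (χ : DirichletCharacter ℝ q) {s : ℂ} (hs : 1 < s.re) :
    LSeries (fun n => (rStar χ n : ℂ)) s =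
      DirichletCharacter.LFunction (χ.ringHomComp Complex.ofRealHom) s * riemannZeta s := by
  have hconv : (fun n => (rStar χ n : ℂ)) =
      LSeries.convolution (fun n => χ.ringHomComp Complex.ofRealHom (n : ZMod q)) 1 := by
    ext n
    simp only [LSeries.convolution_def, Pi.one_apply, mul_one, rStar_apply]
    rw [Nat.sum_divisorsAntidiagonal fun d _ => χ.ringHomComp Complex.ofRealHom (d : ZMod q)]
    simp
  rw [hconv, LSeries_convolution' (DirichletCharacter.LSeriesSummable_of_one_lt_re _ hs)
    (LSeriesSummable_one_iff.2 hs), DirichletCharacter.LFunction_eq_LSeries _ hs,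
    LSeries_one_eq_riemannZeta hs]

lemma ringHomComp_ofRealHom_ne_one (hχ : χ ≠ 1) : χ.ringHomComp Complex.ofRealHom ≠ 1 :=
  (MulChar.ringHomComp_ne_one_iff (f := Complex.ofRealHom) Complex.ofReal_injective).2 hχ

lemma LFunction_one_eq [NeZero q] (hχ : χ ≠ 1) {L : ℝ} (hmean : HasSqrtMean (rStar χ) L) :
    DirichletCharacter.LFunction (χ.ringHomComp Complex.ofRealHom) 1 = L := by
  have hcast : Tendsto (fun s : ℝ => (s : ℂ)) (𝓝[>] 1) (𝓝[≠] 1) := by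
    refine tendsto_nhdsWithin_iff.2
      ⟨(Complex.continuous_ofReal.tendsto' 1 1 rfl).mono_left nhdsWithin_le_nhds, ?_⟩
    filter_upwards [self_mem_nhdsWithin] with s hs
    exact fun h => (Set.mem_Ioi.1 hs).ne' (Complex.ofReal_eq_one.1 h)
  have hresidue := LSeries_tendsto_sub_mul_nhds_one_of_tendsto_sum_div_and_nonneg
    (fun n => rStar χ n) hmean.tendsto_sum_div (rStar_nonneg χ)
  have hL := ((DirichletCharacter.differentiable_LFunction
    (ringHomComp_ofRealHom_ne_one hχ)).continuous.tendsto
      1).comp (hcast.mono_right nhdsWithin_le_nhds)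
  rw [← mul_one (DirichletCharacter.LFunction _ _)]
  refine tendsto_nhds_unique (hL.mul (riemannZeta_residue_one.comp hcast)) (hresidue.congr' ?_)
  filter_upwards [self_mem_nhdsWithin] with s hs
  rw [LSeries_rStar χ (by simpa using hs)]
  simp only [Function.comp_apply]
  ring

lemma HasSqrtMean.rStar_pos [NeZero q] (hχ : χ ≠ 1) {L : ℝ} (hmean : HasSqrtMean (rStar χ) L) :
    0 < L := by
  have hnonneg : 0 ≤ L := ge_of_tendsto' hmean.tendsto_sum_div fun n =>
    div_nonneg (sum_nonneg fun i _ => rStar_nonneg χ i) (Nat.cast_nonneg n)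
  have hne : (L : ℂ) ≠ 0 := LFunction_one_eq hχ hmean ▸
    DirichletCharacter.LFunction_apply_one_ne_zero
      (ringHomComp_ofRealHom_ne_one hχ)
  exact hnonneg.lt_of_ne' (Complex.ofReal_ne_zero.1 hne)

end LValue

section PrimeSums

lemma sum_log_le_mul_log (n : ℕ) : ∑ m ∈ Ioc 0 n, Real.log m ≤ n * Real.log n := by
  calc ∑ m ∈ Ioc 0 n, Real.log m ≤ ∑ _m ∈ Ioc 0 n, Real.log n := by
        refine sum_le_sum fun m hm => ?_
        obtain ⟨hm0, hmn⟩ := mem_Ioc.1 hm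
        gcongr
    _ = n * Real.log n := by simp

lemma sum_primesLE_log_mul_le (n : ℕ) :
    ∑ p ∈ n.primesLE, Real.log p * ((n : ℝ) / p - 1) ≤ ∑ m ∈ Ioc 0 n, Real.log m := by
  have hlog : ∑ m ∈ Ioc 0 n, Λ m * ((n / m : ℕ) : ℝ) = ∑ m ∈ Ioc 0 n, Real.log m := by
    rw [← sum_Ioc_mul_zeta_eq_sum, vonMangoldt_mul_zeta]
    rfl
  rw [← hlog]
  have hsub : n.primesLE ⊆ Ioc 0 n := fun p hp =>
    mem_Ioc.2 ⟨(Nat.mem_primesLE.1 hp).2.pos, (Nat.mem_primesLE.1 hp).1⟩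
  refine le_trans (sum_le_sum fun p hp => ?_) (sum_le_sum_of_subset_of_nonneg hsub
    fun i _ _ => mul_nonneg vonMangoldt_nonneg (Nat.cast_nonneg _))
  rw [vonMangoldt_apply_prime (Nat.mem_primesLE.1 hp).2, ← Nat.floor_div_eq_div (K := ℝ)]
  gcongr
  exact (Nat.sub_one_lt_floor _).le

lemma sum_primesLE_log_div_le (n : ℕ) :
    ∑ p ∈ n.primesLE, Real.log p / p ≤ Real.log n + Real.log 4 := by
  rcases n.eq_zero_or_pos with rfl | hn
  · simpa using Real.log_nonneg (by norm_num : (1 : ℝ) ≤ 4)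
  have hn0 : (0 : ℝ) < n := by exact_mod_cast hn
  have hexpand : ∑ p ∈ n.primesLE, Real.log p * ((n : ℝ) / p - 1) =
      n * ∑ p ∈ n.primesLE, Real.log p / p - Chebyshev.theta n := by
    rw [Chebyshev.theta_eq_sum_primesLE_log, mul_sum, ← sum_sub_distrib]
    exact sum_congr rfl fun p _ => by ring
  refine le_of_mul_le_mul_left ?_ hn0
  linarith [sum_primesLE_log_mul_le n, sum_log_le_mul_log n,
    Chebyshev.theta_le_log4_mul_x hn0.le]

lemma one_sub_div_le_log_sub_log {x y : ℝ} (hx : 0 < x) (hy : 0 < y) :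
    1 - x / y ≤ Real.log y - Real.log x := by
  rw [← Real.log_div hy.ne' hx.ne', ← inv_div]
  exact Real.one_sub_inv_le_log_of_pos (div_pos hy hx)

lemma sum_Ioc_log_sub_log (n : ℕ) :
    ∑ k ∈ Ioc 1 n, (Real.log k - Real.log (k - 1 : ℕ)) = Real.log n := by
  induction n with
  | zero => simp
  | succ n ih =>
    rcases n.eq_zero_or_pos with rfl | hn
    · simp
    · rw [sum_Ioc_succ_top hn, ih, Nat.add_sub_cancel, add_sub_cancel]

lemma sum_log_sub_log_div_log_le {n : ℕ} (hn : 2 ≤ n) :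
    ∑ k ∈ Ioc 1 n, (Real.log k - Real.log (k - 1 : ℕ)) * (Real.log k)⁻¹ ≤
      Real.log (Real.log n) - Real.log (Real.log 2) + 1 := by
  have hlog : ∀ k : ℕ, 2 ≤ k → 0 < Real.log k := fun k hk =>
    Real.log_pos (by exact_mod_cast hk)
  induction n, hn using Nat.le_induction with
  | base => simp [(Real.log_pos one_lt_two).ne']
  | succ n hn ih =>
    have hstep := one_sub_div_le_log_sub_log (hlog n hn) (hlog (n + 1) (by omega))
    rw [sum_Ioc_succ_top (by omega), Nat.add_sub_cancel, sub_mul,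
      mul_inv_cancel₀ (hlog (n + 1) (by omega)).ne', ← div_eq_mul_inv]
    linarith

lemma sum_primesLE_inv_le {n : ℕ} (hn : 2 ≤ n) :
    ∑ p ∈ n.primesLE, (p : ℝ)⁻¹ ≤ Real.log (Real.log n) - Real.log (Real.log 2) + 3 := by
  have hlog4 : Real.log 4 * (Real.log 2)⁻¹ = 2 := by
    rw [show (4 : ℝ) = 2 ^ 2 by norm_num, Real.log_pow,
      mul_inv_cancel_right₀ (Real.log_pos one_lt_two).ne', Nat.cast_ofNat]
  -- The summand at `k = 2` carries the error `log 4` in `∑_{p ≤ k} log p / p ≤ log k + log 4`.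
  calc ∑ p ∈ n.primesLE, (p : ℝ)⁻¹
      = ∑ k ∈ Ioc 1 n, (if k.Prime then Real.log k / k else 0) * (Real.log k)⁻¹ := by
        simp only [Nat.primesLE_eq_filter_Ioc_one, sum_filter, ite_mul, zero_mul]
        refine sum_congr rfl fun k hk => ?_
        have := (Real.log_pos (Nat.one_lt_cast.2 (mem_Ioc.1 hk).1)).ne'
        split_ifs <;> field_simp
    _ ≤ ∑ k ∈ Ioc 1 n, ((Real.log k - Real.log (k - 1 : ℕ)) + if k = 2 then Real.log 4 else 0) *
          (Real.log k)⁻¹ := by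
        refine sum_Ioc_mul_le_sum_Ioc_mul_of_antitoneOn (fun k hk => ?_) (fun i hi j _ hij => ?_)
          fun i _ => inv_nonneg.2 (Real.log_natCast_nonneg i)
        · rw [← sum_filter, ← Nat.primesLE_eq_filter_Ioc_one, sum_add_distrib, sum_ite_eq',
            if_pos (mem_Ioc.2 ⟨one_lt_two, (mem_Ioc.1 hk).1⟩), sum_Ioc_log_sub_log]
          exact sum_primesLE_log_div_le k
        · have := Real.log_pos (Nat.one_lt_cast.2 hi.1)
          have := zero_lt_one.trans hi.1
          gcongr
    _ = ∑ k ∈ Ioc 1 n, (Real.log k - Real.log (k - 1 : ℕ)) * (Real.log k)⁻¹ + 2 := by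
        simp only [add_mul, sum_add_distrib, ite_mul, zero_mul, sum_ite_eq']
        rw [if_pos (mem_Ioc.2 ⟨one_lt_two, hn⟩), Nat.cast_ofNat, hlog4]
    _ ≤ _ := by linarith [sum_log_sub_log_div_log_le hn]

end PrimeSums

section RankinExponent

/-- The quantity `L_N = log (ω(N) + 3)` measuring the number of prime factors of the level. -/
noncomputable def levelLog (N : ℕ) : ℝ := Real.log (#N.primeFactors + 3)

/-- The shift `δ = 1 / (4 L_N)` used to apply Rankin's trick at level `N`. -/
noncomputable def rankinExponent (N : ℕ) : ℝ := (4 * levelLog N)⁻¹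

lemma one_le_levelLog (N : ℕ) : 1 ≤ levelLog N := by
  rw [levelLog, Real.le_log_iff_exp_le (by positivity)]
  linarith [Real.exp_one_lt_d9, (Nat.cast_nonneg #N.primeFactors : (0 : ℝ) ≤ _)]

lemma levelLog_pos (N : ℕ) : 0 < levelLog N := one_pos.trans_le (one_le_levelLog N)

lemma rankinExponent_pos (N : ℕ) : 0 < rankinExponent N :=
  inv_pos.2 (mul_pos four_pos (levelLog_pos N))

lemma rankinExponent_mul_levelLog (N : ℕ) : rankinExponent N * levelLog N = 1 / 4 := by
  have := levelLog_pos N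
  rw [rankinExponent]
  field_simp

lemma rankinExponent_le (N : ℕ) : rankinExponent N ≤ 1 / 4 := by
  rw [← rankinExponent_mul_levelLog N]
  exact le_mul_of_one_le_right (rankinExponent_pos N).le (one_le_levelLog N)

lemma rpow_sub_one_le {x δ : ℝ} (hx : 1 ≤ x) (hδ : 0 ≤ δ) (h : δ * Real.log x ≤ 1 / 4) :
    x ^ (δ - 1) ≤ x⁻¹ + 2 * δ * (Real.log x / x) := by
  have hx0 := zero_lt_one.trans_le hx
  have hexp : x ^ δ ≤ 1 + 2 * (δ * Real.log x) := by
    have hpos := mul_nonneg hδ (Real.log_nonneg hx)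
    have hquad := Real.abs_exp_sub_one_sub_id_le (x := δ * Real.log x) (by
      rw [abs_of_nonneg hpos]; linarith)
    rw [Real.rpow_def_of_pos hx0, mul_comm]
    nlinarith [(abs_le.1 hquad).2]
  calc x ^ (δ - 1) = x ^ δ / x := Real.rpow_sub_one hx0.ne' δ
    _ ≤ (1 + 2 * (δ * Real.log x)) / x := by gcongr
    _ = _ := by field_simp

lemma sum_primesLE_rpow_le {n : ℕ} {δ : ℝ} (hn : 2 ≤ n) (hδ : 0 ≤ δ) (h : δ * Real.log n ≤ 1 / 4) :
    ∑ p ∈ n.primesLE, (p : ℝ) ^ (δ - 1) ≤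
      Real.log (Real.log n) - Real.log (Real.log 2) + 4 + 2 * δ * Real.log 4 := by
  calc ∑ p ∈ n.primesLE, (p : ℝ) ^ (δ - 1)
      ≤ ∑ p ∈ n.primesLE, ((p : ℝ)⁻¹ + 2 * δ * (Real.log p / p)) := by
        refine sum_le_sum fun p hp => ?_
        obtain ⟨hpn, hp⟩ := Nat.mem_primesLE.1 hp
        have := hp.pos
        refine rpow_sub_one_le (by exact_mod_cast hp.one_lt.le) hδ (le_trans ?_ h)
        gcongr
    _ = ∑ p ∈ n.primesLE, (p : ℝ)⁻¹ + 2 * δ * ∑ p ∈ n.primesLE, Real.log p / p := by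
        rw [sum_add_distrib, ← mul_sum]
    _ ≤ _ := by
        have := mul_le_mul_of_nonneg_left (sum_primesLE_log_div_le n) (mul_nonneg zero_le_two hδ)
        linarith [sum_primesLE_inv_le hn]

lemma sum_rpow_sub_one_le_two {s : Finset ℕ} {n : ℕ} {δ : ℝ} (hn : 1 ≤ n) (hs : #s ≤ n)
    (hns : ∀ p ∈ s, n ≤ p) (hδ : 0 ≤ δ) (hδ1 : δ ≤ 1) (h : δ * Real.log n ≤ 1 / 4) :
    ∑ p ∈ s, (p : ℝ) ^ (δ - 1) ≤ 2 := by
  have hn0 : (0 : ℝ) < n := by exact_mod_cast hn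
  have hterm : ∀ p ∈ s, (p : ℝ) ^ (δ - 1) ≤ 2 / n := fun p hp => by
    calc (p : ℝ) ^ (δ - 1) ≤ (n : ℝ) ^ (δ - 1) :=
          Real.rpow_le_rpow_of_nonpos hn0 (by exact_mod_cast hns p hp) (sub_nonpos.2 hδ1)
      _ ≤ (n : ℝ)⁻¹ + 2 * δ * (Real.log n / n) := rpow_sub_one_le (by exact_mod_cast hn) hδ h
      _ = (1 + 2 * (δ * Real.log n)) / n := by field_simp
      _ ≤ 2 / n := by gcongr; linarith
  calc ∑ p ∈ s, (p : ℝ) ^ (δ - 1) ≤ #s • (2 / (n : ℝ)) := sum_le_card_nsmul _ _ _ hterm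
    _ ≤ n * (2 / n) := by rw [nsmul_eq_mul]; gcongr
    _ = 2 := by field_simp

lemma exists_sum_primeFactors_rpow_le : ∃ B : ℝ, ∀ N : ℕ,
    ∑ p ∈ N.primeFactors, (p : ℝ) ^ (rankinExponent N - 1) ≤ Real.log (levelLog N) + B := by
  refine ⟨-Real.log (Real.log 2) + 4 + Real.log 4 + 2, fun N => ?_⟩
  set n := #N.primeFactors + 3 with hn
  have hlog : Real.log n = levelLog N := by simp [hn, levelLog]
  have hδ := rankinExponent_pos N
  have hδ4 := rankinExponent_le N
  have hδn : rankinExponent N * Real.log n = 1 / 4 := hlog ▸ rankinExponent_mul_levelLog N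
  have small : ∑ p ∈ N.primeFactors with p ≤ n, (p : ℝ) ^ (rankinExponent N - 1) ≤
      Real.log (levelLog N) - Real.log (Real.log 2) + 4 + Real.log 4 := by
    have hsub : {p ∈ N.primeFactors | p ≤ n} ⊆ n.primesLE := fun p hp =>
      Nat.mem_primesLE.2 ⟨(mem_filter.1 hp).2, Nat.prime_of_mem_primeFactors (mem_filter.1 hp).1⟩
    have hsum := sum_primesLE_rpow_le (by omega) hδ.le hδn.le
    have hlog4 : 0 ≤ Real.log 4 := Real.log_nonneg (by norm_num)
    rw [hlog] at hsum
    refine (sum_le_sum_of_subset_of_nonneg hsub fun p _ _ => by positivity).trans ?_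
    nlinarith
  have large : ∑ p ∈ N.primeFactors with ¬p ≤ n, (p : ℝ) ^ (rankinExponent N - 1) ≤ 2 :=
    sum_rpow_sub_one_le_two (by omega) ((card_filter_le _ _).trans (Nat.le_add_right _ _))
      (fun p hp => (not_le.1 (mem_filter.1 hp).2).le) hδ.le (by linarith) hδn.le
  rw [← sum_filter_add_sum_filter_not N.primeFactors (· ≤ n)]
  linarith

lemma exists_exp_mul_sum_primeFactors_rpow_le (k : ℕ) : ∃ B : ℝ, 0 < B ∧ ∀ N : ℕ,
    Real.exp (k * ∑ p ∈ N.primeFactors, (p : ℝ) ^ (rankinExponent N - 1)) ≤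
      B * levelLog N ^ k := by
  obtain ⟨B, hB⟩ := exists_sum_primeFactors_rpow_le
  refine ⟨Real.exp (k * B), Real.exp_pos _, fun N => ?_⟩
  calc _ ≤ Real.exp (k * (Real.log (levelLog N) + B)) := by gcongr; exact hB N
    _ = Real.exp (k * B) * levelLog N ^ k := by
      rw [mul_add, add_comm, Real.exp_add, Real.exp_nat_mul (Real.log _),
        Real.exp_log (levelLog_pos N)]

end RankinExponent

section BellSeries

variable {a b c : ArithmeticFunction ℝ} {p : ℕ}

/-- The Bell series `∑ₑ a(pᵉ) Xᵉ` of an arithmetic function at `p`. -/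
noncomputable def bellSeries (p : ℕ) (a : ArithmeticFunction ℝ) : PowerSeries ℝ :=
  PowerSeries.mk fun e => a (p ^ e)

lemma coeff_bellSeries (p : ℕ) (a : ArithmeticFunction ℝ) (e : ℕ) :
    (bellSeries p a).coeff e = a (p ^ e) :=
  PowerSeries.coeff_mk _ _

lemma bellSeries_mul (hp : p.Prime) (a b : ArithmeticFunction ℝ) :
    bellSeries p (a * b) = bellSeries p a * bellSeries p b := by
  ext e
  simp only [PowerSeries.coeff_mul, coeff_bellSeries, mul_apply]
  rw [Nat.sum_divisorsAntidiagonal fun i j => a i * b j, Nat.divisors_prime_pow hp, sum_map,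
    Finset.Nat.sum_antidiagonal_eq_sum_range_succ fun i j => a (p ^ i) * b (p ^ j)]
  refine sum_congr rfl fun i hi => ?_
  rw [Function.Embedding.coeFn_mk, Nat.pow_div (Nat.lt_succ_iff.1 (mem_range.1 hi)) hp.pos]

lemma bellSeries_one (hp : p.Prime) : bellSeries p 1 = 1 := by
  ext e
  simp [coeff_bellSeries, PowerSeries.coeff_one, one_apply, hp.one_lt.ne']

lemma bellSeries_pow (hp : p.Prime) (a : ArithmeticFunction ℝ) (k : ℕ) :
    bellSeries p (a ^ k) = bellSeries p a ^ k := by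
  induction k with
  | zero => simp only [pow_zero, bellSeries_one hp]
  | succ k ih => rw [pow_succ, pow_succ, bellSeries_mul hp, ih]

lemma bellSeries_eq_linear (h1 : a 1 = 1) (h2 : ∀ e, a (p ^ (e + 2)) = 0) :
    bellSeries p a = ((1 + Polynomial.C (a p) * Polynomial.X : Polynomial ℝ) : PowerSeries ℝ) := by
  ext e
  rw [Polynomial.coeff_coe, coeff_bellSeries]
  rcases e with _ | _ | e
  · simp [h1]
  · simp [Polynomial.coeff_one]
  · simp [h2, Polynomial.coeff_one]

lemma pmul_mul_pmul (hc : ∀ m n, c (m * n) = c m * c n) (a b : ArithmeticFunction ℝ) :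
    a.pmul c * b.pmul c = (a * b).pmul c := by
  ext n
  simp only [mul_apply, pmul_apply, sum_mul]
  refine sum_congr rfl fun x hx => ?_
  rw [← (Nat.mem_divisorsAntidiagonal.1 hx).1, hc]
  ring

end BellSeries

section Cofactor

variable {q : ℕ} {χ : DirichletCharacter ℝ q} {k N p : ℕ}

/-- The summand `μ(n)² k^ω(n) r*(n)`, restricted to `n` coprime to `N`. -/
noncomputable def squarefreeRStar (χ : DirichletCharacter ℝ q) (k N : ℕ) : ArithmeticFunction ℝ :=
  ⟨fun n => if n.gcd N = 1 then (μ n : ℝ) ^ 2 * (k : ℝ) ^ #n.primeFactors * rStar χ n else 0,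
    by simp⟩

lemma squarefreeRStar_apply (χ : DirichletCharacter ℝ q) (k N n : ℕ) :
    squarefreeRStar χ k N n =
      if n.gcd N = 1 then (μ n : ℝ) ^ 2 * (k : ℝ) ^ #n.primeFactors * rStar χ n else 0 :=
  rfl

lemma isMultiplicative_squarefreeRStar (χ : DirichletCharacter ℝ q) (k N : ℕ) :
    (squarefreeRStar χ k N).IsMultiplicative := by
  refine ⟨by simp [squarefreeRStar_apply, (isMultiplicative_rStar χ).map_one], fun {m n} h => ?_⟩
  have hgcd : (m * n).gcd N = 1 ↔ m.gcd N = 1 ∧ n.gcd N = 1 := Nat.coprime_mul_iff_left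
  simp only [squarefreeRStar_apply, (isMultiplicative_rStar χ).map_mul_of_coprime h,
    isMultiplicative_moebius.map_mul_of_coprime h, h.primeFactors_mul,
    card_union_of_disjoint h.disjoint_primeFactors, pow_add, hgcd, Int.cast_mul, ite_and,
    ite_mul, mul_ite, zero_mul, mul_zero]
  split_ifs <;> ring

lemma squarefreeRStar_apply_prime (hp : p.Prime) :
    squarefreeRStar χ k N p = if p ∣ N then 0 else k * (1 + χ (p : ZMod q)) := by
  have hgcd : p.gcd N = 1 ↔ ¬p ∣ N := hp.coprime_iff_not_dvd
  simp [squarefreeRStar_apply, hgcd, moebius_apply_prime hp, hp.primeFactors, rStar_apply,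
    hp.sum_divisors, add_comm]

lemma squarefreeRStar_apply_prime_pow_eq_zero (hp : p.Prime) (e : ℕ) :
    squarefreeRStar χ k N (p ^ (e + 2)) = 0 := by
  simp [squarefreeRStar_apply, moebius_apply_prime_pow hp]

/-- The function `μ χ`, the Dirichlet inverse of `χ`. -/
noncomputable def moebiusChar (χ : DirichletCharacter ℝ q) : ArithmeticFunction ℝ :=
  (μ : ArithmeticFunction ℝ).pmul (characterFunction χ)

lemma moebiusChar_apply (χ : DirichletCharacter ℝ q) (n : ℕ) :
    moebiusChar χ n = μ n * χ (n : ZMod q) := by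
  rcases eq_or_ne n 0 with rfl | hn
  · simp
  · rw [moebiusChar, pmul_apply, intCoe_apply, characterFunction,
      ← χ.apply_eq_toArithmeticFunction_apply hn]

lemma moebiusChar_mul_characterFunction (χ : DirichletCharacter ℝ q) :
    moebiusChar χ * characterFunction χ = 1 := by
  have hmul : ∀ m n,
      characterFunction χ (m * n) = characterFunction χ m * characterFunction χ n := by
    intro m n
    simp only [characterFunction, toArithmeticFunction, coe_mk, mul_eq_zero, Nat.cast_mul, map_mul]
    split_ifs <;> simp_all
  have h := pmul_mul_pmul hmul (μ : ArithmeticFunction ℝ) ζ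
  rw [zeta_pmul, coe_moebius_mul_coe_zeta] at h
  rw [moebiusChar, h]
  ext n
  rcases eq_or_ne n 1 with rfl | hn
  · rw [pmul_apply, χ.isMultiplicative_toArithmeticFunction.map_one, mul_one]
  · rw [pmul_apply, one_apply_ne hn, zero_mul]

/-- The function `g` in the factorization `f = g * r*^{*k}` of the summand `f`. -/
noncomputable def cofactor (χ : DirichletCharacter ℝ q) (k N : ℕ) : ArithmeticFunction ℝ :=
  squarefreeRStar χ k N * (μ * moebiusChar χ) ^ k

lemma isMultiplicative_moebiusChar (χ : DirichletCharacter ℝ q) :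
    (moebiusChar χ).IsMultiplicative :=
  isMultiplicative_moebius.intCast.pmul χ.isMultiplicative_toArithmeticFunction

lemma isMultiplicative_cofactor (χ : DirichletCharacter ℝ q) (k N : ℕ) :
    (cofactor χ k N).IsMultiplicative :=
  (isMultiplicative_squarefreeRStar χ k N).mul
    (isMultiplicative_moebius.intCast.mul (isMultiplicative_moebiusChar χ)).pow

lemma cofactor_mul_rStar_pow (χ : DirichletCharacter ℝ q) (k N : ℕ) :
    cofactor χ k N * rStar χ ^ k = squarefreeRStar χ k N := by
  have hinv : (μ : ArithmeticFunction ℝ) * moebiusChar χ * rStar χ = 1 := by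
    calc _ = (moebiusChar χ * characterFunction χ) * ((μ : ArithmeticFunction ℝ) * ζ) := by
          rw [rStar]; ring
      _ = 1 := by rw [moebiusChar_mul_characterFunction, coe_moebius_mul_coe_zeta, one_mul]
  rw [cofactor, mul_assoc, ← mul_pow, hinv, one_pow, mul_one]

end Cofactor

section LocalFactor

open Polynomial

/-- The polynomial `(1 + c X) ((1 - X) (1 - x X))ᵏ`, which is the Bell series of the cofactor `g`
when `c = f(p)` and `x = χ(p)`. -/
noncomputable def localFactor (c x : ℝ) (k : ℕ) : ℝ[X] :=
  (1 + C c * X) * ((1 + C (-1) * X) * (1 + C (-x) * X)) ^ k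

lemma cofactor_apply_prime_pow {q p : ℕ} (χ : DirichletCharacter ℝ q) (k N : ℕ) (hp : p.Prime)
    (e : ℕ) : cofactor χ k N (p ^ e) =
      (localFactor (squarefreeRStar χ k N p) (χ (p : ZMod q)) k).coeff e := by
  have hf := bellSeries_eq_linear (isMultiplicative_squarefreeRStar χ k N).map_one
    (squarefreeRStar_apply_prime_pow_eq_zero hp)
  have hμ := bellSeries_eq_linear (a := (μ : ArithmeticFunction ℝ)) (p := p) (by simp)
    fun e => by simp [moebius_apply_prime_pow hp]
  have hμχ := bellSeries_eq_linear (p := p) (isMultiplicative_moebiusChar χ).map_one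
    fun e => by simp [moebiusChar_apply, moebius_apply_prime_pow hp]
  rw [intCoe_apply, moebius_apply_prime hp, Int.cast_neg, Int.cast_one] at hμ
  rw [moebiusChar_apply, moebius_apply_prime hp, Int.cast_neg, Int.cast_one, neg_one_mul] at hμχ
  rw [← coeff_bellSeries, cofactor, bellSeries_mul hp, bellSeries_pow hp, bellSeries_mul hp,
    hf, hμ, hμχ, ← Polynomial.coe_mul, ← Polynomial.coe_pow, ← Polynomial.coe_mul,
    Polynomial.coeff_coe, localFactor]

lemma eval_localFactor (c x y : ℝ) (k : ℕ) :
    (localFactor c x k).eval y = (1 - y) ^ k * (1 - x * y) ^ k * (1 + c * y) := by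
  simp only [localFactor, eval_mul, eval_pow, eval_add, eval_one, eval_C, eval_X,
    ← mul_pow]
  ring

lemma coeff_zero_localFactor (c x : ℝ) (k : ℕ) : (localFactor c x k).coeff 0 = 1 := by
  simp [coeff_zero_eq_eval_zero, eval_localFactor]

lemma coeff_one_localFactor (x : ℝ) (k : ℕ) : (localFactor (k * (1 + x)) x k).coeff 1 = 0 := by
  have hderiv : ∀ P : ℝ[X], P.coeff 1 = (derivative P).eval 0 := fun P => by
    simp [← coeff_zero_eq_eval_zero, coeff_derivative]
  simp only [hderiv, localFactor, derivative_mul, derivative_pow, derivative_add, derivative_one,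
    derivative_C, derivative_X, eval_mul, eval_pow, eval_add, eval_one, eval_zero, eval_C, eval_X,
    mul_zero, add_zero, one_pow, mul_one]
  ring

/-- Coefficientwise domination `P ≪ Q` of polynomials. -/
def IsMajorizedBy (P Q : ℝ[X]) : Prop := ∀ e, |P.coeff e| ≤ Q.coeff e

variable {P P' Q Q' : ℝ[X]} {c d x y : ℝ}

lemma IsMajorizedBy.coeff_nonneg (h : IsMajorizedBy P Q) (e : ℕ) : 0 ≤ Q.coeff e :=
  (abs_nonneg _).trans (h e)

lemma IsMajorizedBy.mul (h : IsMajorizedBy P Q) (h' : IsMajorizedBy P' Q') :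
    IsMajorizedBy (P * P') (Q * Q') := by
  intro e
  rw [coeff_mul, coeff_mul]
  refine (abs_sum_le_sum_abs _ _).trans (sum_le_sum fun i _ => ?_)
  rw [abs_mul]
  exact mul_le_mul (h _) (h' _) (abs_nonneg _) (h.coeff_nonneg _)

lemma IsMajorizedBy.pow (h : IsMajorizedBy P Q) (k : ℕ) : IsMajorizedBy (P ^ k) (Q ^ k) := by
  induction k with
  | zero => intro e; rw [pow_zero, pow_zero, coeff_one]; split_ifs <;> simp
  | succ k ih => rw [pow_succ, pow_succ]; exact ih.mul h

lemma IsMajorizedBy.linear (h : |c| ≤ d) : IsMajorizedBy (1 + C c * X) (1 + C d * X) := by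
  intro e
  rcases e with _ | _ | e <;> simp [coeff_one, coeff_X, h]

lemma hasSum_coeff_mul_pow (P : ℝ[X]) (y : ℝ) :
    HasSum (fun e => P.coeff e * y ^ e) (P.eval y) := by
  rw [eval_eq_sum_range]
  refine hasSum_sum_of_ne_finset_zero fun e he => ?_
  rw [coeff_eq_zero_of_natDegree_lt (by simpa using he), zero_mul]

lemma summable_abs_coeff_mul_pow (P : ℝ[X]) (y : ℝ) : Summable fun e => |P.coeff e| * y ^ e :=
  summable_of_hasFiniteSupport <| P.support.finite_toSet.subset fun e he => by
    simpa using (mul_ne_zero_iff.1 he).1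

lemma IsMajorizedBy.tsum_le_eval (h : IsMajorizedBy P Q) (hy : 0 ≤ y) :
    ∑' e, |P.coeff e| * y ^ e ≤ Q.eval y := by
  rw [← (hasSum_coeff_mul_pow Q y).tsum_eq]
  exact (summable_abs_coeff_mul_pow P y).tsum_le_tsum
    (fun e => mul_le_mul_of_nonneg_right (h e) (pow_nonneg hy e))
    (hasSum_coeff_mul_pow Q y).summable

lemma IsMajorizedBy.tsum_tail_le (h : IsMajorizedBy P Q) (h1 : P.coeff 1 = 0) (hy : 0 ≤ y)
    (hy1 : y ≤ 1) : ∑' e, |P.coeff (e + 1)| * y ^ (e + 1) ≤ Q.eval 1 * y ^ 2 := by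
  have hQ : HasSum (fun e => Q.coeff e) (Q.eval 1) := by simpa using hasSum_coeff_mul_pow Q 1
  have hterm : ∀ e, |P.coeff (e + 1)| * y ^ (e + 1) ≤ Q.coeff (e + 1) * y ^ 2 := by
    rintro (_ | e)
    · rw [zero_add, h1, abs_zero, zero_mul]
      exact mul_nonneg (h.coeff_nonneg 1) (sq_nonneg y)
    · exact mul_le_mul (h _) (pow_le_pow_of_le_one hy hy1 (by omega)) (pow_nonneg hy _)
        (h.coeff_nonneg _)
  have hQtail := (summable_nat_add_iff 1).2 hQ.summable
  calc ∑' e, |P.coeff (e + 1)| * y ^ (e + 1) ≤ ∑' e, Q.coeff (e + 1) * y ^ 2 :=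
        ((summable_nat_add_iff 1).2 (summable_abs_coeff_mul_pow P y)).tsum_le_tsum hterm
          (hQtail.mul_right _)
    _ = (∑' e, Q.coeff (e + 1)) * y ^ 2 := tsum_mul_right
    _ ≤ Q.eval 1 * y ^ 2 := by
        gcongr
        rw [← hQ.tsum_eq, hQ.summable.tsum_eq_zero_add]
        exact le_add_of_nonneg_left (h.coeff_nonneg 0)

lemma IsMajorizedBy.tsum_le_one_add (h : IsMajorizedBy P Q) (h0 : P.coeff 0 = 1)
    (h1 : P.coeff 1 = 0) (hy : 0 ≤ y) (hy1 : y ≤ 1) :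
    ∑' e, |P.coeff e| * y ^ e ≤ 1 + Q.eval 1 * y ^ 2 := by
  rw [(summable_abs_coeff_mul_pow P y).tsum_eq_zero_add, h0, abs_one, pow_zero, mul_one]
  gcongr
  exact h.tsum_tail_le h1 hy hy1

lemma IsMajorizedBy.abs_eval_sub_one_le (h : IsMajorizedBy P Q) (h0 : P.coeff 0 = 1)
    (h1 : P.coeff 1 = 0) (hy : 0 ≤ y) (hy1 : y ≤ 1) : |P.eval y - 1| ≤ Q.eval 1 * y ^ 2 := by
  have hP := hasSum_coeff_mul_pow P y
  have habs : ∀ e, |P.coeff (e + 1)| * y ^ (e + 1) = ‖P.coeff (e + 1) * y ^ (e + 1)‖ := fun e => by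
    rw [Real.norm_eq_abs, abs_mul, abs_of_nonneg (pow_nonneg hy _)]
  have hsum := (summable_nat_add_iff 1).2 (summable_abs_coeff_mul_pow P y)
  have htail := h.tsum_tail_le h1 hy hy1
  simp only [habs] at hsum htail
  rw [← hP.tsum_eq, hP.summable.tsum_eq_zero_add, h0, pow_zero, mul_one, add_sub_cancel_left]
  exact (norm_tsum_le_tsum_norm hsum).trans htail

/-- The polynomial `(1 + d X) (1 + X)²ᵏ`, a majorant of the local factors with `|c| ≤ d`. -/
noncomputable def localMajorant (d : ℝ) (k : ℕ) : ℝ[X] :=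
  (1 + C d * X) * ((1 + C 1 * X) * (1 + C 1 * X)) ^ k

lemma isMajorizedBy_localFactor (hc : |c| ≤ d) (hx : |x| ≤ 1) (k : ℕ) :
    IsMajorizedBy (localFactor c x k) (localMajorant d k) :=
  (IsMajorizedBy.linear hc).mul
    (((IsMajorizedBy.linear (by simp)).mul (IsMajorizedBy.linear (by simpa))).pow k)

lemma eval_localMajorant (d y : ℝ) (k : ℕ) :
    (localMajorant d k).eval y = (1 + d * y) * (1 + y) ^ (2 * k) := by
  simp [localMajorant, pow_mul, pow_two]

lemma tsum_abs_coeff_localFactor_zero_le (hx : |x| ≤ 1) (k : ℕ) (hy : 0 ≤ y) :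
    ∑' e, |(localFactor 0 x k).coeff e| * y ^ e ≤ Real.exp ((2 * k : ℕ) * y) := by
  refine ((isMajorizedBy_localFactor abs_zero.le hx k).tsum_le_eval hy).trans ?_
  rw [eval_localMajorant, zero_mul, add_zero, one_mul, Real.exp_nat_mul]
  gcongr
  linarith [Real.add_one_le_exp y]

lemma isMajorizedBy_localFactor_of_abs_le_one (hx : |x| ≤ 1) (k : ℕ) :
    IsMajorizedBy (localFactor (k * (1 + x)) x k) (localMajorant (2 * k) k) := by
  refine isMajorizedBy_localFactor ?_ hx k
  obtain ⟨hx1, hx2⟩ := abs_le.1 hx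
  rw [abs_of_nonneg (mul_nonneg k.cast_nonneg (by linarith)), mul_comm (2 : ℝ)]
  gcongr
  linarith

lemma tsum_abs_coeff_localFactor_le (hx : |x| ≤ 1) (k : ℕ) (hy : 0 ≤ y) (hy1 : y ≤ 1) :
    ∑' e, |(localFactor (k * (1 + x)) x k).coeff e| * y ^ e ≤
      Real.exp ((localMajorant (2 * k) k).eval 1 * y ^ 2) := by
  refine ((isMajorizedBy_localFactor_of_abs_le_one hx k).tsum_le_one_add
    (coeff_zero_localFactor _ _ _) (coeff_one_localFactor x k) hy hy1).trans ?_
  linarith [Real.add_one_le_exp ((localMajorant (2 * k) k).eval 1 * y ^ 2)]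

lemma abs_eval_localFactor_sub_one_le (hx : |x| ≤ 1) (k : ℕ) (hy : 0 ≤ y) (hy1 : y ≤ 1) :
    |(localFactor (k * (1 + x)) x k).eval y - 1| ≤ (localMajorant (2 * k) k).eval 1 * y ^ 2 :=
  (isMajorizedBy_localFactor_of_abs_le_one hx k).abs_eval_sub_one_le
    (coeff_zero_localFactor _ _ _) (coeff_one_localFactor x k) hy hy1

end LocalFactor

section RankinTrick

variable {q N k p : ℕ} {χ : DirichletCharacter ℝ q}

lemma sum_range_le_prod_tsum {w : ArithmeticFunction ℝ} (hw : w.IsMultiplicative)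
    (hw0 : ∀ m, 0 ≤ w m) (hsum : ∀ {p}, p.Prime → Summable fun e => w (p ^ e)) (n : ℕ) :
    ∑ m ∈ range n, w m ≤ ∏ p ∈ n.primesBelow, ∑' e, w (p ^ e) := by
  have hprod := (EulerProduct.summable_and_hasSum_smoothNumbers_prod_primesBelow_tsum
    hw.map_one hw.map_mul_of_coprime (fun hp => (hsum hp).norm) n).2
  have hpos : ∑ m ∈ range n with 0 < m, w m = ∑ m ∈ range n, w m :=
    sum_filter_of_ne fun m _ hm => Nat.pos_of_ne_zero fun h => hm (h ▸ ArithmeticFunction.map_zero)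
  have hsmooth : ∑ m ∈ range n with 0 < m, w m =
      ∑ m ∈ {m ∈ range n | 0 < m}.subtype (· ∈ n.smoothNumbers), w m := by
    refine (sum_subtype_of_mem _ fun m hm => ?_).symm
    rw [mem_filter, mem_range] at hm
    exact Nat.mem_smoothNumbers_of_lt hm.2 hm.1
  rw [← hpos, hsmooth, ← hprod.tsum_eq]
  exact hprod.summable.sum_le_tsum _ fun m _ => hw0 m

/-- The Rankin weights `|g(m)| m^(δ - 1)` of the cofactor `g`. -/
noncomputable def rankinWeight (χ : DirichletCharacter ℝ q) (k N : ℕ) : ArithmeticFunction ℝ :=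
  ⟨fun m => |cofactor χ k N m| * (m : ℝ) ^ (rankinExponent N - 1), by simp⟩

lemma rankinWeight_apply (χ : DirichletCharacter ℝ q) (k N m : ℕ) :
    rankinWeight χ k N m = |cofactor χ k N m| * (m : ℝ) ^ (rankinExponent N - 1) :=
  rfl

lemma rankinWeight_nonneg (χ : DirichletCharacter ℝ q) (k N m : ℕ) : 0 ≤ rankinWeight χ k N m := by
  rw [rankinWeight_apply]
  positivity

lemma isMultiplicative_rankinWeight (χ : DirichletCharacter ℝ q) (k N : ℕ) :
    (rankinWeight χ k N).IsMultiplicative := by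
  refine ⟨by simp [rankinWeight_apply, (isMultiplicative_cofactor χ k N).map_one], fun h => ?_⟩
  simp only [rankinWeight_apply, (isMultiplicative_cofactor χ k N).map_mul_of_coprime h, abs_mul,
    Nat.cast_mul, Real.mul_rpow (Nat.cast_nonneg _) (Nat.cast_nonneg _)]
  ring

lemma rankinWeight_apply_prime_pow (χ : DirichletCharacter ℝ q) (k N : ℕ) (hp : p.Prime) (e : ℕ) :
    rankinWeight χ k N (p ^ e) =
      |(localFactor (squarefreeRStar χ k N p) (χ (p : ZMod q)) k).coeff e| *
        ((p : ℝ) ^ (rankinExponent N - 1)) ^ e := by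
  rw [rankinWeight_apply, cofactor_apply_prime_pow χ k N hp, Nat.cast_pow,
    ← Real.rpow_natCast_mul p.cast_nonneg, ← Real.rpow_mul_natCast p.cast_nonneg, mul_comm (e : ℝ)]

lemma summable_rankinWeight_prime_pow (χ : DirichletCharacter ℝ q) (k N : ℕ) (hp : p.Prime) :
    Summable fun e => rankinWeight χ k N (p ^ e) := by
  simpa only [rankinWeight_apply_prime_pow χ k N hp] using summable_abs_coeff_mul_pow _ _

lemma eval_one_localMajorant_nonneg (k : ℕ) : 0 ≤ (localMajorant (2 * k) k).eval 1 := by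
  rw [eval_localMajorant]
  positivity

lemma tsum_rankinWeight_prime_pow_le (χ : DirichletCharacter ℝ q) (k N : ℕ) (hp : p.Prime) :
    ∑' e, rankinWeight χ k N (p ^ e) ≤
      Real.exp ((if p ∣ N then (2 * k : ℕ) * (p : ℝ) ^ (rankinExponent N - 1) else 0) +
        (localMajorant (2 * k) k).eval 1 * (p : ℝ) ^ (-3 / 2 : ℝ)) := by
  have hp1 : (1 : ℝ) ≤ p := by exact_mod_cast hp.one_lt.le
  have hδ := rankinExponent_le N
  have hy0 : 0 ≤ (p : ℝ) ^ (rankinExponent N - 1) := by positivity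
  have hK := eval_one_localMajorant_nonneg k
  simp only [rankinWeight_apply_prime_pow χ k N hp, squarefreeRStar_apply_prime hp]
  split_ifs with h
  · refine (tsum_abs_coeff_localFactor_zero_le (abs_apply_le_one _) k hy0).trans ?_
    gcongr
    exact le_add_of_nonneg_right (by positivity)
  · have hy1 := Real.rpow_le_one_of_one_le_of_nonpos hp1 (by linarith : rankinExponent N - 1 ≤ 0)
    refine (tsum_abs_coeff_localFactor_le (abs_apply_le_one _) k hy0 hy1).trans ?_
    rw [zero_add, ← Real.rpow_mul_natCast p.cast_nonneg]
    gcongr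
    push_cast
    linarith

lemma exists_sum_rankinWeight_le (χ : DirichletCharacter ℝ q) (k : ℕ) : ∃ B : ℝ, 0 < B ∧
    ∀ N ≠ 0, ∀ n, ∑ m ∈ range n, rankinWeight χ k N m ≤ B * levelLog N ^ (2 * k) := by
  obtain ⟨B, hB, hBN⟩ := exists_exp_mul_sum_primeFactors_rpow_le (2 * k)
  set K := (localMajorant (2 * k) k).eval 1
  set S := ∑' n : ℕ, (n : ℝ) ^ (-3 / 2 : ℝ)
  refine ⟨B * Real.exp (K * S), by positivity, fun N hN n => ?_⟩
  have hbad : ∑ p ∈ n.primesBelow,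
      (if p ∣ N then (2 * k : ℕ) * (p : ℝ) ^ (rankinExponent N - 1) else 0) ≤
        (2 * k : ℕ) * ∑ p ∈ N.primeFactors, (p : ℝ) ^ (rankinExponent N - 1) := by
    rw [← sum_filter, ← mul_sum]
    gcongr
    intro p hp
    rw [mem_filter] at hp
    exact Nat.mem_primeFactors.2 ⟨Nat.prime_of_mem_primesBelow hp.1, hp.2, hN⟩
  have hgood : ∑ p ∈ n.primesBelow, K * (p : ℝ) ^ (-3 / 2 : ℝ) ≤ K * S := by
    rw [← mul_sum]
    exact mul_le_mul_of_nonneg_left ((Real.summable_nat_rpow.2 (by norm_num)).sum_le_tsum _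
      fun p _ => by positivity) (eval_one_localMajorant_nonneg k)
  calc ∑ m ∈ range n, rankinWeight χ k N m
      ≤ ∏ p ∈ n.primesBelow, ∑' e, rankinWeight χ k N (p ^ e) :=
        sum_range_le_prod_tsum (isMultiplicative_rankinWeight χ k N) (rankinWeight_nonneg χ k N)
          (summable_rankinWeight_prime_pow χ k N) n
    _ ≤ ∏ p ∈ n.primesBelow, Real.exp (_ + K * (p : ℝ) ^ (-3 / 2 : ℝ)) :=
        prod_le_prod (fun p _ => tsum_nonneg fun e => rankinWeight_nonneg χ k N _) fun p hp =>
          tsum_rankinWeight_prime_pow_le χ k N (Nat.prime_of_mem_primesBelow hp)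
    _ ≤ Real.exp ((2 * k : ℕ) * ∑ p ∈ N.primeFactors, (p : ℝ) ^ (rankinExponent N - 1)) *
          Real.exp (K * S) := by
        rw [← Real.exp_sum, sum_add_distrib, ← Real.exp_add]
        gcongr
    _ ≤ B * levelLog N ^ (2 * k) * Real.exp (K * S) := by gcongr; exact hBN N
    _ = B * Real.exp (K * S) * levelLog N ^ (2 * k) := by ring

lemma one_add_log_le_mul_rpow {x : ℝ} (hx : 1 ≤ x) (N : ℕ) :
    1 + Real.log x ≤ 5 * levelLog N * x ^ rankinExponent N := by
  have hL := one_le_levelLog N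
  have hpow := Real.one_le_rpow hx (rankinExponent_pos N).le
  have hlog := Real.log_le_rpow_div (zero_le_one.trans hx) (rankinExponent_pos N)
  have hinv : x ^ rankinExponent N / rankinExponent N =
      4 * levelLog N * x ^ rankinExponent N := by
    rw [rankinExponent, div_inv_eq_mul, mul_comm]
  nlinarith

lemma abs_cofactor_mul_log_div_le (χ : DirichletCharacter ℝ q) (k N m : ℕ) :
    |cofactor χ k N m| * (1 + Real.log m) / m ≤ 5 * levelLog N * rankinWeight χ k N m := by
  rcases m.eq_zero_or_pos with rfl | hm
  · simp [ArithmeticFunction.map_zero]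
  have hm1 : (1 : ℝ) ≤ m := by exact_mod_cast hm
  calc |cofactor χ k N m| * (1 + Real.log m) / m
      ≤ |cofactor χ k N m| * (5 * levelLog N * (m : ℝ) ^ rankinExponent N) / m := by
        gcongr
        exact one_add_log_le_mul_rpow hm1 N
    _ = 5 * levelLog N * rankinWeight χ k N m := by
        rw [rankinWeight_apply, Real.rpow_sub_one (by positivity)]
        ring

lemma exists_summable_cofactor_mul_log (χ : DirichletCharacter ℝ q) (k : ℕ) :
    ∃ B : ℝ, 0 < B ∧ ∀ N ≠ 0,
      Summable (fun m : ℕ => |cofactor χ k N m| * (1 + Real.log m) / m) ∧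
        ∑' m : ℕ, |cofactor χ k N m| * (1 + Real.log m) / m ≤ B * levelLog N ^ (2 * k + 1) := by
  obtain ⟨B, hB, hBN⟩ := exists_sum_rankinWeight_le χ k
  refine ⟨5 * B, by positivity, fun N hN => ?_⟩
  have hnonneg : ∀ m : ℕ, 0 ≤ |cofactor χ k N m| * (1 + Real.log m) / m := fun m => by
    have := Real.log_natCast_nonneg m
    positivity
  have hL := levelLog_pos N
  have hpartial : ∀ n, ∑ m ∈ range n, |cofactor χ k N m| * (1 + Real.log m) / m ≤
      5 * B * levelLog N ^ (2 * k + 1) := fun n => by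
    calc _ ≤ 5 * levelLog N * ∑ m ∈ range n, rankinWeight χ k N m := by
          rw [mul_sum]
          exact sum_le_sum fun m _ => abs_cofactor_mul_log_div_le χ k N m
      _ ≤ 5 * levelLog N * (B * levelLog N ^ (2 * k)) := by gcongr; exact hBN N hN n
      _ = _ := by ring
  exact ⟨summable_of_sum_range_le hnonneg hpartial, Real.tsum_le_of_sum_range_le hnonneg hpartial⟩

end RankinTrick

section EulerProduct

variable {q k N p : ℕ} {χ : DirichletCharacter ℝ q}

/-- The factor `∑ₑ g(pᵉ) / pᵉ` at `p` of the Euler product of the cofactor `g`. -/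
noncomputable def eulerFactor (χ : DirichletCharacter ℝ q) (k N p : ℕ) : ℝ :=
  (localFactor (squarefreeRStar χ k N p) (χ (p : ZMod q)) k).eval (p : ℝ)⁻¹

lemma eulerProductP1_eq_tprod (χ : DirichletCharacter ℝ q) (k N : ℕ) :
    eulerProductP1 q χ k N = ∏' p : Nat.Primes, eulerFactor χ k N p := by
  refine tprod_congr fun p => ?_
  rw [eulerFactor, eval_localFactor, squarefreeRStar_apply_prime p.2]
  split_ifs
  · rw [zero_mul, add_zero, mul_one, mul_pow, one_div, div_eq_mul_inv]
  · rw [one_div, div_eq_mul_inv, div_eq_mul_inv]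

lemma summable_abs_cofactor_div (χ : DirichletCharacter ℝ q) (k : ℕ) (hN : N ≠ 0) :
    Summable fun m : ℕ => |cofactor χ k N m| / m := by
  obtain ⟨_, -, h⟩ := exists_summable_cofactor_mul_log χ k
  exact summable_abs_div_of_mul_log (h N hN).1

lemma tsum_cofactor_prime_pow_div (χ : DirichletCharacter ℝ q) (k N : ℕ) (hp : p.Prime) :
    ∑' e, cofactor χ k N (p ^ e) / (p ^ e : ℕ) = eulerFactor χ k N p := by
  rw [eulerFactor, ← (hasSum_coeff_mul_pow _ _).tsum_eq]
  refine tsum_congr fun e => ?_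
  rw [cofactor_apply_prime_pow χ k N hp, Nat.cast_pow, inv_pow, div_eq_mul_inv]

lemma hasProd_eulerFactor_tsum (χ : DirichletCharacter ℝ q) (k : ℕ) (hN : N ≠ 0) :
    HasProd (fun p : Nat.Primes => eulerFactor χ k N p) (∑' m : ℕ, cofactor χ k N m / m) := by
  have hone : cofactor χ k N 1 / (1 : ℕ) = 1 := by
    rw [(isMultiplicative_cofactor χ k N).map_one, Nat.cast_one, div_one]
  have hmul : ∀ {m n : ℕ}, m.Coprime n → cofactor χ k N (m * n) / (m * n : ℕ) =
      cofactor χ k N m / m * (cofactor χ k N n / n) := fun h => by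
    rw [(isMultiplicative_cofactor χ k N).map_mul_of_coprime h, Nat.cast_mul, mul_div_mul_comm]
  have hsum : Summable fun m : ℕ => ‖cofactor χ k N m / m‖ := by
    simpa [abs_div] using summable_abs_cofactor_div χ k hN
  have h := EulerProduct.eulerProduct_hasProd (f := fun m : ℕ => cofactor χ k N m / m) hone hmul
    hsum (by rw [Nat.cast_zero, div_zero])
  simpa only [fun p : Nat.Primes => tsum_cofactor_prime_pow_div χ k N p.2] using h

lemma eulerProductP1_eq_tsum (χ : DirichletCharacter ℝ q) (k : ℕ) (hN : N ≠ 0) :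
    eulerProductP1 q χ k N = ∑' m : ℕ, cofactor χ k N m / m := by
  rw [eulerProductP1_eq_tprod, (hasProd_eulerFactor_tsum χ k hN).tprod_eq]

lemma hasProd_eulerFactor (χ : DirichletCharacter ℝ q) (k : ℕ) (hN : N ≠ 0) :
    HasProd (fun p : Nat.Primes => eulerFactor χ k N p) (eulerProductP1 q χ k N) :=
  eulerProductP1_eq_tsum χ k hN ▸ hasProd_eulerFactor_tsum χ k hN

lemma one_add_apply_nonneg (χ : DirichletCharacter ℝ q) (n : ZMod q) : 0 ≤ 1 + χ n :=
  neg_le_iff_add_nonneg'.1 (abs_le.1 (abs_apply_le_one n)).1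

lemma squarefreeRStar_one_apply_prime (hp : p.Prime) :
    squarefreeRStar χ k 1 p = k * (1 + χ (p : ZMod q)) := by
  rw [squarefreeRStar_apply_prime hp, if_neg hp.not_dvd_one]

lemma eulerFactor_one_pos (χ : DirichletCharacter ℝ q) (k : ℕ) (hp : p.Prime) :
    0 < eulerFactor χ k 1 p := by
  have hinv : (p : ℝ)⁻¹ ≤ 2⁻¹ := inv_anti₀ two_pos (by exact_mod_cast hp.two_le)
  have hinv0 : 0 ≤ (p : ℝ)⁻¹ := by positivity
  have hχ0 := one_add_apply_nonneg χ p
  have hχ1 : 0 < 1 - χ p * (p : ℝ)⁻¹ := by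
    nlinarith [(abs_le.1 (abs_apply_le_one (χ := χ) p)).2]
  have h1 : 0 < 1 - (p : ℝ)⁻¹ := by linarith
  rw [eulerFactor, eval_localFactor, squarefreeRStar_one_apply_prime hp]
  positivity

lemma summable_eulerFactor_one_sub_one (χ : DirichletCharacter ℝ q) (k : ℕ) :
    Summable fun p : Nat.Primes => eulerFactor χ k 1 p - 1 := by
  have hsq : Summable fun p : Nat.Primes => ((p : ℝ)⁻¹) ^ 2 := by
    simp only [inv_pow]
    exact (Real.summable_nat_pow_inv.2 one_lt_two).comp_injective Nat.Primes.coe_nat_injective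
  refine (hsq.mul_left ((localMajorant (2 * k) k).eval 1)).of_norm_bounded fun p => ?_
  rw [Real.norm_eq_abs, eulerFactor, squarefreeRStar_one_apply_prime p.2]
  exact abs_eval_localFactor_sub_one_le (abs_apply_le_one _) k (by positivity)
    (inv_le_one_of_one_le₀ (by exact_mod_cast p.2.one_lt.le))

lemma eulerProductP1_one_pos (χ : DirichletCharacter ℝ q) (k : ℕ) : 0 < eulerProductP1 q χ k 1 := by
  have hlog := Real.summable_log_one_add_of_summable (summable_eulerFactor_one_sub_one χ k)
  simp only [add_sub_cancel] at hlog
  rw [eulerProductP1_eq_tprod,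
    ← Real.rexp_tsum_eq_tprod (fun p => eulerFactor_one_pos χ k p.2) hlog]
  exact Real.exp_pos _

lemma eulerFactor_mul_ite (χ : DirichletCharacter ℝ q) (k N : ℕ) (hp : p.Prime) :
    eulerFactor χ k N p * (if p ∣ N then 1 + k * (1 + χ (p : ZMod q)) / p else 1) =
      eulerFactor χ k 1 p := by
  simp only [eulerFactor, eval_localFactor, squarefreeRStar_one_apply_prime hp,
    squarefreeRStar_apply_prime hp]
  split_ifs <;> ring

lemma eulerProductP1_mul_prod (χ : DirichletCharacter ℝ q) (k : ℕ) (hN : N ≠ 0) :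
    eulerProductP1 q χ k N * ∏ p ∈ N.primeFactors, (1 + k * (1 + χ (p : ZMod q)) / p) =
      eulerProductP1 q χ k 1 := by
  set w : ℕ → ℝ := fun p => if p ∣ N then 1 + k * (1 + χ (p : ZMod q)) / p else 1
  have hw : HasProd (fun p : Nat.Primes => w p)
      (∏ p ∈ N.primeFactors, (1 + k * (1 + χ (p : ZMod q)) / p)) := by
    have hprod : ∏ p ∈ N.primeFactors, (1 + k * (1 + χ (p : ZMod q)) / p) =
        ∏ p ∈ N.primeFactors.subtype Nat.Prime, w p := by
      rw [prod_subtype_of_mem w fun p => Nat.prime_of_mem_primeFactors]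
      exact prod_congr rfl fun p hp => (if_pos (Nat.dvd_of_mem_primeFactors hp)).symm
    rw [hprod]
    refine hasProd_prod_of_ne_finset_one fun p hp => if_neg fun h => hp ?_
    exact mem_subtype.2 (Nat.mem_primeFactors.2 ⟨p.2, h, hN⟩)
  have h := (hasProd_eulerFactor χ k hN).mul hw
  simp only [w, fun p : Nat.Primes => eulerFactor_mul_ite χ k N p.2] at h
  exact h.unique (hasProd_eulerFactor χ k one_ne_zero)

lemma prod_primeFactors_le_exp (χ : DirichletCharacter ℝ q) (k N : ℕ) :
    ∏ p ∈ N.primeFactors, (1 + k * (1 + χ (p : ZMod q)) / p) ≤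
      Real.exp ((2 * k : ℕ) * ∑ p ∈ N.primeFactors, (p : ℝ) ^ (rankinExponent N - 1)) := by
  rw [mul_sum, Real.exp_sum]
  refine prod_le_prod (fun p _ => ?_) fun p hp => ?_
  · have := one_add_apply_nonneg χ p
    positivity
  · have hp1 : (1 : ℝ) ≤ p := by exact_mod_cast (Nat.prime_of_mem_primeFactors hp).one_lt.le
    have hinv : (p : ℝ)⁻¹ ≤ (p : ℝ) ^ (rankinExponent N - 1) := by
      rw [← Real.rpow_neg_one]
      exact Real.rpow_le_rpow_of_exponent_le hp1 (by linarith [rankinExponent_pos N])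
    calc 1 + k * (1 + χ (p : ZMod q)) / p ≤ 1 + k * (1 + 1) * (p : ℝ)⁻¹ := by
          rw [← div_eq_mul_inv]
          gcongr
          exact (abs_le.1 (abs_apply_le_one _)).2
      _ ≤ (2 * k : ℕ) * (p : ℝ) ^ (rankinExponent N - 1) + 1 := by
          rw [add_comm, one_add_one_eq_two, mul_comm (k : ℝ)]
          push_cast
          gcongr
      _ ≤ _ := Real.add_one_le_exp _

lemma exists_le_eulerProductP1_mul_levelLog (χ : DirichletCharacter ℝ q) (k : ℕ) :
    ∃ c : ℝ, 0 < c ∧ ∀ N ≠ 0, c ≤ eulerProductP1 q χ k N * levelLog N ^ (2 * k) := by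
  obtain ⟨B, hB, hBN⟩ := exists_exp_mul_sum_primeFactors_rpow_le (2 * k)
  have hone := eulerProductP1_one_pos χ k
  refine ⟨eulerProductP1 q χ k 1 / B, by positivity, fun N hN => ?_⟩
  have hprod : 0 < ∏ p ∈ N.primeFactors, (1 + k * (1 + χ (p : ZMod q)) / p) :=
    prod_pos fun p _ => by
      have := one_add_apply_nonneg χ p
      positivity
  have hpos : 0 < eulerProductP1 q χ k N :=
    pos_of_mul_pos_left (eulerProductP1_mul_prod χ k hN ▸ hone) hprod.le
  rw [div_le_iff₀ hB, ← eulerProductP1_mul_prod χ k hN, mul_assoc, mul_comm _ B]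
  gcongr
  exact (prod_primeFactors_le_exp χ k N).trans (hBN N)

end EulerProduct

section MeanValue

variable {q : ℕ} {χ : DirichletCharacter ℝ q}

lemma summatory_squarefreeRStar (χ : DirichletCharacter ℝ q) (k N : ℕ) (X : ℝ) :
    summatory (squarefreeRStar χ k N) X = ∑ n ∈ Icc 1 ⌊X⌋₊ with n.gcd N = 1,
      (μ n : ℝ) ^ 2 * (k : ℝ) ^ #n.primeFactors * ∑ d ∈ n.divisors, χ (d : ZMod q) := by
  rw [summatory, sum_filter]
  exact sum_congr rfl fun n _ => by rw [squarefreeRStar_apply, rStar_apply]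

lemma exists_abs_summatory_squarefreeRStar_sub_le [NeZero q] (hχ : χ ≠ 1) {L : ℝ}
    (hL : Tendsto (fun M : ℕ => ∑ n ∈ Icc 1 M, χ (n : ZMod q) / (n : ℝ)) atTop (𝓝 L)) (k : ℕ) :
    ∃ C : ℝ, 0 < C ∧ ∀ N ≠ 0, ∀ X, Real.exp 1 ≤ X →
      |summatory (squarefreeRStar χ (k + 1) N) X -
          eulerProductP1 q χ (k + 1) N * L ^ (k + 1) / k.factorial * X * Real.log X ^ k| ≤
        C * (eulerProductP1 q χ (k + 1) N * L ^ (k + 1) / k.factorial * X * Real.log X ^ k) *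
          levelLog N ^ (4 * (k + 1) + 1) / √(Real.log X) := by
  have hmean := hasSqrtMean_rStar hχ hL
  have hLpos := hmean.rStar_pos hχ
  obtain ⟨B, hB, hconv⟩ :=
    (hmean.hasLogMean_pow (rStar_nonneg χ) k).exists_abs_summatory_mul_sub_le
  obtain ⟨G, hG, hcof⟩ := exists_summable_cofactor_mul_log χ (k + 1)
  obtain ⟨c, hc, hP⟩ := exists_le_eulerProductP1_mul_levelLog χ (k + 1)
  refine ⟨B * G * k.factorial / (c * L ^ (k + 1)), by positivity, fun N hN X hX => ?_⟩
  have hX0 : 0 < X := (Real.exp_pos 1).trans_le hX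
  have hlog : 1 ≤ Real.log X := (Real.le_log_iff_exp_le hX0).2 hX
  have hLN := levelLog_pos N
  have hmain := hconv _ (hcof N hN).1 X hX
  rw [cofactor_mul_rStar_pow, ← eulerProductP1_eq_tsum χ (k + 1) hN, ← mul_assoc, ← mul_assoc,
    ← mul_div_assoc] at hmain
  refine hmain.trans ?_
  set E := X * (Real.log X ^ k / √(Real.log X))
  calc B * E * ∑' m : ℕ, |cofactor χ (k + 1) N m| * (1 + Real.log m) / m
      ≤ B * E * (G * levelLog N ^ (2 * (k + 1) + 1)) := by gcongr; exact (hcof N hN).2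
    _ = B * G / c * E * levelLog N ^ (2 * (k + 1) + 1) * c := by field_simp
    _ ≤ B * G / c * E * levelLog N ^ (2 * (k + 1) + 1) *
          (eulerProductP1 q χ (k + 1) N * levelLog N ^ (2 * (k + 1))) := by
        gcongr
        exact hP N hN
    _ = _ := by
        simp only [E]
        field_simp
        ring

lemma levelLog_pow_le_rpow (N k : ℕ) :
    levelLog N ^ (4 * k + 1) ≤ levelLog N ^ (2 * Real.exp 1 * k + 2) := by
  rw [← Real.rpow_natCast]
  refine Real.rpow_le_rpow_of_exponent_le (one_le_levelLog N) ?_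
  have h := Real.add_one_le_exp (1 : ℝ)
  push_cast
  nlinarith

lemma exp_one_le_exp_mul_levelLog_rpow {C s : ℝ} (hC : 1 ≤ C) (hs : 0 ≤ s) (N : ℕ) :
    Real.exp 1 ≤ Real.exp (C * levelLog N ^ s) :=
  Real.exp_le_exp.2 (one_le_mul_of_one_le_of_one_le hC (Real.one_le_rpow (one_le_levelLog N) hs))

lemma le_mul_levelLog_rpow_div {x a s : ℝ} (hx : 0 ≤ x) (N k : ℕ)
    (h : x ≤ a * levelLog N ^ (4 * k + 1) / s) :
    x ≤ a * levelLog N ^ (2 * Real.exp 1 * k + 2) / s := by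
  have hpow : 0 < levelLog N ^ (4 * k + 1) := pow_pos (levelLog_pos N) _
  rw [mul_div_right_comm] at h ⊢
  have has : 0 ≤ a / s := nonneg_of_mul_nonneg_left (hx.trans h) hpow
  exact h.trans (mul_le_mul_of_nonneg_left (levelLog_pow_le_rpow N k) has)

end MeanValue

end CharacterMeanValue

theorem mean_value_of_multiplicative_function_general {η : ℕ} (hη : 1 ≤ η) {q : ℕ} [NeZero q]
    {χ : DirichletCharacter ℝ q} (hχ : χ ≠ 1) {L1 : ℝ}
    (hL1 : Filter.Tendsto (fun M : ℕ => ∑ n ∈ Icc 1 M, χ (n : ZMod q) / (n : ℝ))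
      Filter.atTop (nhds L1)) :
    ∃ C : ℝ, 0 < C ∧ ∀ N : ℕ, 1 ≤ N → ∀ X : ℝ, Real.exp 1 ≤ X →
      |(∑ n ∈ Icc 1 ⌊X⌋₊ with n.gcd N = 1, (ArithmeticFunction.moebius n : ℝ) ^ 2 *
            (η : ℝ) ^ #n.primeFactors * ∑ d ∈ n.divisors, χ (d : ZMod q)) -
          eulerProductP1 q χ η N * L1 ^ η / Real.Gamma η * X * Real.log X ^ (η - 1)| ≤
        C * (eulerProductP1 q χ η N * L1 ^ η / Real.Gamma η * X * Real.log X ^ (η - 1)) *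
          Real.log (#N.primeFactors + 3) ^ (4 * η + 1) / √(Real.log X) := by
  obtain ⟨k, rfl⟩ := Nat.exists_eq_add_of_le' hη
  obtain ⟨C, hC, h⟩ := CharacterMeanValue.exists_abs_summatory_squarefreeRStar_sub_le hχ hL1 k
  refine ⟨C, hC, fun N hN X hX => ?_⟩
  rw [← CharacterMeanValue.summatory_squarefreeRStar, Nat.cast_succ, Real.Gamma_nat_eq_factorial,
    Nat.add_sub_cancel]
  exact h N (Nat.one_le_iff_ne_zero.1 hN) X hX

theorem mean_value_of_multiplicative_function (η : ℕ) (hη : 1 ≤ η)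
    (q : ℕ) (hq : 3 ≤ q) (χ : DirichletCharacter ℝ q) (hχ : χ ≠ 1)
    (hχval : ∀ n : ℕ, χ (n : ZMod q) ∈ ({-1, 0, 1} : Set ℝ))
    (L1 : ℝ)
    (hL1 : Filter.Tendsto (fun M : ℕ => ∑ n ∈ Finset.Icc 1 M, χ (n : ZMod q) / (n : ℝ))
      Filter.atTop (nhds L1)) :
    ∃ C C' : ℝ, 0 < C ∧ 0 < C' ∧ ∀ N : ℕ, 1 ≤ N → ∀ X : ℝ,
      Real.exp (C * Real.log ((N.primeFactors.card : ℝ) + 3) ^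
          (2 * Real.exp 1 * (η : ℝ) + 2)) ≤ X →
      |(∑ n ∈ (Finset.Icc 1 ⌊X⌋₊).filter (fun n => Nat.gcd n N = 1),
            ((ArithmeticFunction.moebius n : ℝ)) ^ 2 * (η : ℝ) ^ n.primeFactors.card *
              ∑ d ∈ n.divisors, χ ((d : ZMod q))) -
          eulerProductP1 q χ η N * L1 ^ η / Real.Gamma (η : ℝ) * X *
            Real.log X ^ (η - 1)| ≤
        C' * (eulerProductP1 q χ η N * L1 ^ η / Real.Gamma (η : ℝ) * X *
            Real.log X ^ (η - 1)) *
          Real.log ((N.primeFactors.card : ℝ) + 3) ^ (2 * Real.exp 1 * (η : ℝ) + 2) /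
            Real.sqrt (Real.log X) := by
  have : NeZero q := ⟨by omega⟩
  obtain ⟨C, hC, h⟩ := mean_value_of_multiplicative_function_general hη hχ hL1
  exact ⟨1, C, one_pos, hC, fun N hN X hX =>
    CharacterMeanValue.le_mul_levelLog_rpow_div (abs_nonneg _) N η (h N hN X
      ((CharacterMeanValue.exp_one_le_exp_mul_levelLog_rpow le_rfl (by positivity) N).trans hX))⟩
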